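/- There are families (G_n) of finite connected planar graphs and constants C₁, C₂ > 0 such that all vertices of G_n and of the dual G_n* have degree at most 6, Diam G_n + Diam G_n* ≤ C₁·n, yet for every spanning tree T of G_n (with dual spanning tree T*), Diam T + Diam T* ≥ C₂·n². In particular there is no constant C such that every finite connected planar graph G admits a spanning tree T with Diam T ≤ C·Diam G and Diam T* ≤ C·Diam G*. -/

import Mathlib

/-- `edgeReach ends S u v`: `u` and `v` are joined by a walk using edges from `S`,
in the multigraph whose edge `e` has endpoints `ends e`. -/
def edgeReach {V E : Type} (ends : E → Sym2 V) (S : Set E) : V → V → Prop :=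
  Relation.ReflTransGen fun u v => ∃ e ∈ S, ends e = s(u, v)

/-- The spanning subgraph with edge set `S` is connected (spans all vertices). -/
def edgeConn {V E : Type} (ends : E → Sym2 V) (S : Set E) : Prop :=
  ∀ u v : V, edgeReach ends S u v

/-- The edge set `S` is acyclic: every edge of `S` is a bridge of `S`
(its endpoints are not joined avoiding it); in particular loops are cycles. -/
def edgeAcyclic {V E : Type} (ends : E → Sym2 V) (S : Set E) : Prop :=
  ∀ e ∈ S, ∀ u v : V, ends e = s(u, v) → ¬ edgeReach ends (S \ {e}) u v

/-- `S` is the edge set of a spanning tree: a connected acyclic spanning subgraph. -/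
def IsSpanningTree {V E : Type} (ends : E → Sym2 V) (S : Set E) : Prop :=
  edgeConn ends S ∧ edgeAcyclic ends S

/-- A finite connected multigraph `G` embedded in the plane together with its planar dual
`G*`, presented combinatorially: `V` is the vertex set of `G`, `F` the set of faces of `G`
(the vertex set of `G*`, including the unbounded face), and each edge `e` of `G` has
endpoints `ends e` in `G` and corresponds to the dual edge of `G*` joining the two faces
`dualEnds e` on either side of it.  The axioms record the standard facts about plane
duality: both graphs are connected, and a set `S` of edges is acyclic in `G` iff the duals
of the complementary edges span `G*` connectedly, and dually. -/
structure PlaneDualPair where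
  V : Type
  F : Type
  E : Type
  [finV : Finite V]
  [finF : Finite F]
  [finE : Finite E]
  [neV : Nonempty V]
  [neF : Nonempty F]
  ends : E → Sym2 V
  dualEnds : E → Sym2 F
  conn : edgeConn ends Set.univ
  dual_conn : edgeConn dualEnds Set.univ
  acyclic_iff_dual_conn : ∀ S : Set E, edgeAcyclic ends S ↔ edgeConn dualEnds Sᶜ
  conn_iff_dual_acyclic : ∀ S : Set E, edgeConn ends S ↔ edgeAcyclic dualEnds Sᶜ

/-- `edgeReachIn ends S k u v`: there is a walk of length `k` from `u` to `v` using
edges from `S`. -/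
def edgeReachIn {V E : Type} (ends : E → Sym2 V) (S : Set E) : ℕ → V → V → Prop
  | 0, u, v => u = v
  | k + 1, u, v => ∃ w, (∃ e ∈ S, ends e = s(u, w)) ∧ edgeReachIn ends S k w v

/-- Graph distance in the spanning subgraph with edge set `S` (length of a shortest walk). -/
noncomputable def edgeDist {V E : Type} (ends : E → Sym2 V) (S : Set E) (u v : V) : ℕ :=
  sInf {k | edgeReachIn ends S k u v}

/-- Diameter of the spanning subgraph with edge set `S`: the maximal distance between
two vertices. -/
noncomputable def edgeDiam {V E : Type} (ends : E → Sym2 V) (S : Set E) : ℕ :=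
  sInf {D | ∀ u v : V, edgeDist ends S u v ≤ D}

/-- Degree of a vertex in the multigraph (loops counted twice). -/
noncomputable def vertDegree {V E : Type} (ends : E → Sym2 V) (v : V) : ℕ :=
  {e | v ∈ ends e}.ncard + {e | ends e = s(v, v)}.ncard


set_option linter.unusedSectionVars false
set_option linter.unusedVariables false

namespace DualTree

section basics
variable {V E : Type} {ends : E → Sym2 V} {S : Set E}

theorem reach_symm {u v : V} (h : edgeReach ends S u v) : edgeReach ends S v u := by
  induction h with
  | refl => exact Relation.ReflTransGen.refl
  | tail _ hbc ih =>
    obtain ⟨e, he, hs⟩ := hbc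
    exact Relation.ReflTransGen.head ⟨e, he, by rw [hs, Sym2.eq_swap]⟩ ih

theorem reach_mono {S' : Set E} (hS : S ⊆ S') {u v : V} (h : edgeReach ends S u v) :
    edgeReach ends S' u v := by
  induction h with
  | refl => exact Relation.ReflTransGen.refl
  | tail _ hbc ih =>
    obtain ⟨e, he, hs⟩ := hbc
    exact ih.tail ⟨e, hS he, hs⟩

theorem reach_edge {e : E} (he : e ∈ S) {u v : V} (hs : ends e = s(u, v)) :
    edgeReach ends S u v :=
  Relation.ReflTransGen.single ⟨e, he, hs⟩

/-- A set of vertices closed under the edges of `S` is closed under reachability. -/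
theorem reach_closed {X : Set V} (hX : ∀ e ∈ S, ∀ u v, ends e = s(u, v) → u ∈ X → v ∈ X)
    {u v : V} (h : edgeReach ends S u v) (hu : u ∈ X) : v ∈ X := by
  induction h with
  | refl => exact hu
  | tail _ hbc ih =>
    obtain ⟨e, he, hs⟩ := hbc
    exact hX e he _ _ hs ih

theorem reachIn_trans {k l : ℕ} {u v w : V} (h : edgeReachIn ends S k u v)
    (h' : edgeReachIn ends S l v w) : edgeReachIn ends S (k + l) u w := by
  induction k generalizing u with
  | zero => simp only [edgeReachIn] at h; subst h; simpa using h'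
  | succ k ih =>
    obtain ⟨x, hx, hr⟩ := h
    rw [Nat.succ_add]
    exact ⟨x, hx, ih hr⟩

theorem reachIn_one {e : E} (he : e ∈ S) {u v : V} (hs : ends e = s(u, v)) :
    edgeReachIn ends S 1 u v := ⟨v, ⟨e, he, hs⟩, rfl⟩

theorem reachIn_symm {k : ℕ} {u v : V} (h : edgeReachIn ends S k u v) :
    edgeReachIn ends S k v u := by
  induction k generalizing u with
  | zero => exact h.symm
  | succ k ih =>
    obtain ⟨x, ⟨e, he, hs⟩, hr⟩ := h
    exact reachIn_trans (ih hr) (reachIn_one he (by rw [hs, Sym2.eq_swap]))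

theorem reachIn_of_reach {u v : V} (h : edgeReach ends S u v) :
    ∃ k, edgeReachIn ends S k u v := by
  induction h with
  | refl => exact ⟨0, rfl⟩
  | tail _ hbc ih =>
    obtain ⟨k, hk⟩ := ih
    obtain ⟨e, he, hs⟩ := hbc
    exact ⟨k + 1, reachIn_trans hk (reachIn_one he hs)⟩

theorem dist_le {k : ℕ} {u v : V} (h : edgeReachIn ends S k u v) : edgeDist ends S u v ≤ k :=
  Nat.sInf_le h

theorem diam_le {D : ℕ} (h : ∀ u v, edgeDist ends S u v ≤ D) : edgeDiam ends S ≤ D :=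
  Nat.sInf_le h

theorem diam_le_of_center {D : ℕ} (c : V) (h : ∀ u, ∃ k ≤ D, edgeReachIn ends S k u c) :
    edgeDiam ends S ≤ 2 * D := by
  refine diam_le fun u v => ?_
  obtain ⟨k, hk, hu⟩ := h u
  obtain ⟨l, hl, hv⟩ := h v
  have := dist_le (reachIn_trans hu (reachIn_symm hv))
  omega

theorem dist_le_diam [Finite V] (u v : V) : edgeDist ends S u v ≤ edgeDiam ends S := by
  have hne : {D | ∀ u v : V, edgeDist ends S u v ≤ D}.Nonempty := by
    obtain ⟨B, hB⟩ := (Set.finite_range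
      (fun p : V × V => edgeDist ends S p.1 p.2)).bddAbove
    exact ⟨B, fun u v => hB ⟨(u, v), rfl⟩⟩
  exact Nat.sInf_mem hne u v

theorem exists_walk [Finite V] (hc : edgeConn ends S) (u v : V) :
    ∃ k ≤ edgeDiam ends S, edgeReachIn ends S k u v :=
  ⟨edgeDist ends S u v, dist_le_diam u v, Nat.sInf_mem (reachIn_of_reach (hc u v))⟩

/-- The edges of a walk. -/
theorem walk_edges {k : ℕ} {u v : V} (h : edgeReachIn ends S k u v) :
    ∃ W : Finset E, W.card ≤ k ∧ edgeReach ends (S ∩ (W : Set E)) u v := by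
  classical
  induction k generalizing u with
  | zero =>
    simp only [edgeReachIn] at h
    subst h
    exact ⟨∅, by simp, Relation.ReflTransGen.refl⟩
  | succ k ih =>
    obtain ⟨x, ⟨e, he, hs⟩, hr⟩ := h
    obtain ⟨W, hW, hreach⟩ := ih hr
    refine ⟨insert e W, (Finset.card_insert_le _ _).trans (by omega), ?_⟩
    refine Relation.ReflTransGen.head ⟨e, ⟨he, by simp⟩, hs⟩ (reach_mono ?_ hreach)
    intro f hf
    exact ⟨hf.1, by simp [hf.2]⟩

/-- At most `Diam` edges separate two vertices. -/
theorem separating_card [Finite V] (hc : edgeConn ends S) (u v : V) (Q : Set E)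
    (hQ : ∀ e ∈ Q, ¬ edgeReach ends (S \ {e}) u v) : Q.ncard ≤ edgeDiam ends S := by
  obtain ⟨k, hk, hw⟩ := exists_walk hc u v
  obtain ⟨W, hW, hr⟩ := walk_edges hw
  have hsub : Q ⊆ (W : Set E) := by
    intro e he
    by_contra hne
    refine hQ e he (reach_mono ?_ hr)
    intro f hf
    refine ⟨hf.1, ?_⟩
    rintro rfl
    exact hne hf.2
  have := Set.ncard_le_ncard hsub W.finite_toSet
  rw [Set.ncard_coe_finset] at this
  omega

end basics

section duality

open Matrix

variable {V F E : Type} [Fintype V] [Fintype F] [Fintype E] [DecidableEq V] [DecidableEq F]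
  [DecidableEq E]

/-- coboundary over `ZMod 2` -/
def cob (a b : E → V) : (V → ZMod 2) →ₗ[ZMod 2] (E → ZMod 2) where
  toFun g := fun e => g (a e) + g (b e)
  map_add' g g' := by ext e; simp only [Pi.add_apply]; ring
  map_smul' c g := by ext e; simp only [Pi.smul_apply, smul_eq_mul, RingHom.id_apply]; ring

theorem z2_eq_of_add {x y : ZMod 2} (h : x + y = 0) : x = y := by
  revert x y; decide

theorem cob_ker_const {a b : E → V} {S : Set E} {g : V → ZMod 2}
    (hg : ∀ e ∈ S, g (a e) + g (b e) = 0) {u v : V}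
    (h : edgeReach (fun e => s(a e, b e)) S u v) : g u = g v := by
  have := reach_closed (X := {w | g u = g w}) ?_ h rfl
  · exact this
  · intro e he x y hs hx
    have h1 := z2_eq_of_add (hg e he)
    simp only [Sym2.eq_iff] at hs
    simp only [Set.mem_ofPred_eq] at hx ⊢
    rcases hs with ⟨rfl, rfl⟩ | ⟨rfl, rfl⟩
    · rw [hx, h1]
    · rw [hx, h1]

theorem cob_rank {a b : E → V} (hc : edgeConn (fun e => s(a e, b e)) Set.univ) [Nonempty V] :
    Fintype.card V ≤ Module.finrank (ZMod 2) (LinearMap.range (cob a b)) + 1 := by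
  have h1 := LinearMap.finrank_range_add_finrank_ker (cob a b)
  rw [Module.finrank_fintype_fun_eq_card] at h1
  have h2 : Module.finrank (ZMod 2) (LinearMap.ker (cob a b)) ≤ 1 := by
    refine finrank_le_one (⟨fun _ => 1, ?_⟩ : LinearMap.ker (cob a b)) ?_
    · rw [LinearMap.mem_ker]; ext e; exact (by decide : (1 : ZMod 2) + 1 = 0)
    · rintro ⟨g, hg⟩
      obtain ⟨v0⟩ := ‹Nonempty V›
      refine ⟨g v0, ?_⟩
      ext v
      have : g v0 = g v := by
        refine cob_ker_const (S := Set.univ) (a := a) (b := b) ?_ (hc v0 v)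
        intro e _
        exact congrFun (LinearMap.mem_ker.1 hg) e
      simp [this]
  omega

/-- Every cycle is a coboundary of the dual, by dimension count. -/
theorem cycle_is_cob {a b : E → V} {c d : E → F} [Nonempty V] [Nonempty F]
    (hV : edgeConn (fun e => s(a e, b e)) Set.univ)
    (hF : edgeConn (fun e => s(c e, d e)) Set.univ)
    (orth : ∀ (g : V → ZMod 2) (f : F → ZMod 2), ∑ e, cob a b g e * cob c d f e = 0)
    (euler : Fintype.card V + Fintype.card F = Fintype.card E + 2)
    (z : E → ZMod 2) (hz : ∀ g : V → ZMod 2, ∑ e, cob a b g e * z e = 0) :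
    ∃ f, cob c d f = z := by
  set A : Matrix E V (ZMod 2) := LinearMap.toMatrix' (cob a b) with hA
  have hAg : ∀ g, A *ᵥ g = cob a b g := fun g => by
    rw [hA, LinearMap.toMatrix'_mulVec]
  have hker : ∀ w : E → ZMod 2, w ∈ LinearMap.ker (Matrix.mulVecLin Aᵀ) ↔
      ∀ g : V → ZMod 2, ∑ e, cob a b g e * w e = 0 := by
    intro w
    have key : ∀ g : V → ZMod 2, ∑ e, cob a b g e * w e = g ⬝ᵥ (Aᵀ *ᵥ w) := by
      intro g
      rw [Matrix.dotProduct_mulVec, Matrix.vecMul_transpose, hAg]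
      rfl
    rw [LinearMap.mem_ker, Matrix.mulVecLin_apply]
    constructor
    · intro h g; rw [key, h]; simp
    · intro h
      ext v
      have := h (Pi.single v 1)
      rw [key] at this
      simpa using this
  have hle : LinearMap.range (cob c d) ≤ LinearMap.ker (Matrix.mulVecLin Aᵀ) := by
    rintro _ ⟨f, rfl⟩
    rw [hker]
    intro g; exact orth g f
  have h1 := LinearMap.finrank_range_add_finrank_ker (Matrix.mulVecLin Aᵀ)
  have h2 : Module.finrank (ZMod 2) (LinearMap.range (Matrix.mulVecLin Aᵀ)) =
      Module.finrank (ZMod 2) (LinearMap.range (cob a b)) := by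
    have h3 : Aᵀ.rank = A.rank := Matrix.rank_transpose A
    have h4 : Matrix.mulVecLin A = cob a b := by
      ext1 v
      apply LinearMap.ext
      intro x
      simp only [LinearMap.comp_apply]
      exact hAg _
    rw [← h4]
    exact h3
  rw [h2, Module.finrank_fintype_fun_eq_card] at h1
  have h5 := cob_rank hV
  have h6 := cob_rank hF
  have heq := Submodule.eq_of_le_of_finrank_le hle (by omega)
  have : z ∈ LinearMap.range (cob c d) := by
    rw [heq, hker]; exact hz
  exact this

/-- the parity vector of a walk is a chain with the right boundary -/
theorem walk_chain {a b : E → V} {S : Set E} {u v : V}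
    (h : edgeReach (fun e => s(a e, b e)) S u v) :
    ∃ z : E → ZMod 2, (∀ e, e ∉ S → z e = 0) ∧
      ∀ g : V → ZMod 2, ∑ e, cob a b g e * z e = g u + g v := by
  induction h with
  | refl =>
    refine ⟨0, by simp, fun g => ?_⟩
    have : ∀ x : ZMod 2, x + x = 0 := by decide
    simp [this]
  | @tail y x _ hbc ih =>
    obtain ⟨z, hz, hg⟩ := ih
    obtain ⟨e, he, hs⟩ := hbc
    refine ⟨z + Pi.single e 1, ?_, fun g => ?_⟩
    · intro e' he'
      have : e' ≠ e := by rintro rfl; exact he' he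
      simp [hz e' he', this]
    · simp only [Pi.add_apply, mul_add, Finset.sum_add_distrib, hg]
      have h2 : ∑ e', cob a b g e' * (Pi.single e 1 : E → ZMod 2) e' = cob a b g e := by
        rw [Finset.sum_eq_single e]
        · simp
        · intro e' _ hne; simp [hne]
        · simp
      rw [h2]
      have h3 : cob a b g e = g y + g x := by
        simp only [Sym2.eq_iff] at hs
        rcases hs with ⟨h, h'⟩ | ⟨h, h'⟩
        · simp [cob, h, h']
        · simp [cob, h, h', add_comm]
      rw [h3]
      have : ∀ p q r : ZMod 2, p + q + (q + r) = p + r := by decide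
      exact this _ _ _

theorem duality_half {a b : E → V} {c d : E → F} [Nonempty V] [Nonempty F]
    (hV : edgeConn (fun e => s(a e, b e)) Set.univ)
    (hF : edgeConn (fun e => s(c e, d e)) Set.univ)
    (orth : ∀ (g : V → ZMod 2) (f : F → ZMod 2), ∑ e, cob a b g e * cob c d f e = 0)
    (euler : Fintype.card V + Fintype.card F = Fintype.card E + 2) (S : Set E) :
    edgeAcyclic (fun e => s(a e, b e)) S ↔ edgeConn (fun e => s(c e, d e)) Sᶜ := by
  classical
  constructor
  · intro hac
    by_contra hnc
    simp only [edgeConn, not_forall] at hnc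
    obtain ⟨x, y, hxy⟩ := hnc
    let f : F → ZMod 2 := fun w => if edgeReach (fun e => s(c e, d e)) Sᶜ x w then 1 else 0
    have hf0 : ∀ e, e ∉ S → cob c d f e = 0 := by
      intro e he
      have h1 : edgeReach (fun e => s(c e, d e)) Sᶜ (c e) (d e) := reach_edge (e := e) he rfl
      have : edgeReach (fun e => s(c e, d e)) Sᶜ x (c e) ↔
          edgeReach (fun e => s(c e, d e)) Sᶜ x (d e) :=
        ⟨fun h => h.trans h1, fun h => h.trans (reach_symm h1)⟩
      simp only [cob, LinearMap.coe_mk, AddHom.coe_mk, f, this]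
      split_ifs <;> decide
    have hex : ∃ e, cob c d f e ≠ 0 := by
      by_contra hall
      push Not at hall
      have := cob_ker_const (S := Set.univ) (a := c) (b := d) (g := f)
        (fun e _ => hall e) (hF x y)
      have hx : f x = 1 := if_pos Relation.ReflTransGen.refl
      have hy : f y = 0 := if_neg hxy
      rw [hx, hy] at this
      exact absurd this (by decide)
    obtain ⟨e, he⟩ := hex
    have heS : e ∈ S := by by_contra h; exact he (hf0 e h)
    have hnr := hac e heS (a e) (b e) rfl
    let g : V → ZMod 2 := fun w =>
      if edgeReach (fun e => s(a e, b e)) (S \ {e}) (a e) w then 1 else 0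
    have hsum := orth g f
    rw [Finset.sum_eq_single e] at hsum
    · have hga : g (a e) = 1 := if_pos Relation.ReflTransGen.refl
      have hgb : g (b e) = 0 := if_neg hnr
      have : cob a b g e = 1 := by simp [cob, hga, hgb]
      rw [this, one_mul] at hsum
      exact he hsum
    · intro e' _ hne
      by_cases he' : e' ∈ S
      · have h1 : edgeReach (fun e => s(a e, b e)) (S \ {e}) (a e') (b e') :=
          reach_edge (e := e') (show e' ∈ S \ {e} from ⟨he', hne⟩) rfl
        have h2 : edgeReach (fun e => s(a e, b e)) (S \ {e}) (a e) (a e') ↔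
            edgeReach (fun e => s(a e, b e)) (S \ {e}) (a e) (b e') :=
          ⟨fun h => h.trans h1, fun h => h.trans (reach_symm h1)⟩
        have : cob a b g e' = 0 := by
          simp only [cob, LinearMap.coe_mk, AddHom.coe_mk, g, h2]
          split_ifs <;> decide
        rw [this, zero_mul]
      · rw [hf0 e' he', mul_zero]
    · simp
  · intro hcon e he u v hs hr
    obtain ⟨z, hz, hg⟩ := walk_chain hr
    have hs' : ∀ g : V → ZMod 2, cob a b g e = g u + g v := by
      intro g
      simp only [Sym2.eq_iff] at hs
      rcases hs with ⟨h, h'⟩ | ⟨h, h'⟩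
      · simp [cob, h, h']
      · simp [cob, h, h', add_comm]
    obtain ⟨f, hf⟩ := cycle_is_cob hV hF orth euler (z + Pi.single e 1) (by
      intro g
      simp only [Pi.add_apply, mul_add, Finset.sum_add_distrib, hg]
      have h2 : ∑ e', cob a b g e' * (Pi.single e 1 : E → ZMod 2) e' = cob a b g e := by
        rw [Finset.sum_eq_single e]
        · simp
        · intro e' _ hne; simp [hne]
        · simp
      rw [h2, hs']
      have : ∀ p : ZMod 2, p + p = 0 := by decide
      exact this _)
    have hconst : ∀ x y, f x = f y := by
      intro x y
      refine cob_ker_const (S := Sᶜ) (a := c) (b := d) ?_ (hcon x y)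
      intro e' he'
      have hne : e' ≠ e := by rintro rfl; exact he' he
      have := congrFun hf e'
      have hz0 : z e' = 0 := hz e' (fun h => he' h.1)
      simpa [cob, hne, hz0] using this
    have h1 := congrFun hf e
    have hz0 : z e = 0 := hz e (by simp)
    simp only [cob, LinearMap.coe_mk, AddHom.coe_mk, Pi.add_apply, hz0, Pi.single_eq_same,
      hconst (c e) (d e), zero_add] at h1
    have : ∀ p : ZMod 2, p + p ≠ 1 := by decide
    exact this _ h1

end duality

end DualTree


set_option linter.unusedSectionVars false
set_option linter.unusedVariables false

namespace DualTree

/-- reverse of a dart -/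
def rev {E : Type} (d : E × Bool) : E × Bool := (d.1, !d.2)

@[simp] theorem rev_rev {E : Type} (d : E × Bool) : rev (rev d) = d := by
  simp [rev]

@[simp] theorem rev_fst {E : Type} (d : E × Bool) : (rev d).1 = d.1 := rfl

theorem eq_or_rev {E : Type} {d d' : E × Bool} (h : d.1 = d'.1) : d = d' ∨ d = rev d' := by
  obtain ⟨e, b⟩ := d
  obtain ⟨e', b'⟩ := d'
  simp only at h
  subst h
  cases b <;> cases b' <;> simp [rev]

/-- endpoints of an edge from a labelling of the darts -/
def labEnds {V E : Type} (lab : E × Bool → V) (e : E) : Sym2 V := s(lab (e, false), lab (e, true))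

theorem labEnds_dart {V E : Type} (lab : E × Bool → V) (d : E × Bool) :
    labEnds lab d.1 = s(lab d, lab (rev d)) := by
  obtain ⟨e, b⟩ := d
  cases b
  · rfl
  · exact Sym2.eq_swap

/-- A combinatorial planar map. -/
structure PMap where
  V : Type
  F : Type
  E : Type
  [finV : Finite V]
  [finF : Finite F]
  [finE : Finite E]
  σ : Equiv.Perm (E × Bool)
  vert : E × Bool → V
  face : E × Bool → F
  vert_σ : ∀ d, vert (σ d) = vert d
  face_σ : ∀ d, face (σ d) = face (rev d)
  vsurj : Function.Surjective vert
  fsurj : Function.Surjective face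
  base : E × Bool
  trans : ∀ O : Set (E × Bool), base ∈ O → (∀ d ∈ O, σ d ∈ O) → (∀ d, σ d ∈ O → d ∈ O) →
    (∀ d ∈ O, rev d ∈ O) → ∀ d, d ∈ O
  euler : Nat.card V + Nat.card F = Nat.card E + 2

attribute [instance] PMap.finV PMap.finF PMap.finE

namespace PMap

variable (P : PMap)

theorem connV : edgeConn (labEnds P.vert) Set.univ := by
  have h : ∀ d, edgeReach (labEnds P.vert) Set.univ (P.vert P.base) (P.vert d) := by
    refine P.trans {d | edgeReach (labEnds P.vert) Set.univ (P.vert P.base) (P.vert d)} ?_ ?_ ?_ ?_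
    · exact Relation.ReflTransGen.refl
    · intro d hd
      simpa only [Set.mem_ofPred_eq, P.vert_σ] using hd
    · intro d hd
      simpa only [Set.mem_ofPred_eq, P.vert_σ] using hd
    · intro d hd
      exact Relation.ReflTransGen.tail hd ⟨d.1, trivial, labEnds_dart _ d⟩
  intro u v
  obtain ⟨d, rfl⟩ := P.vsurj u
  obtain ⟨d', rfl⟩ := P.vsurj v
  exact (reach_symm (h d)).trans (h d')

theorem connF : edgeConn (labEnds P.face) Set.univ := by
  have h : ∀ d, edgeReach (labEnds P.face) Set.univ (P.face P.base) (P.face d) := by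
    have hr : ∀ d, edgeReach (labEnds P.face) Set.univ (P.face d) (P.face (rev d)) := fun d =>
      reach_edge (e := d.1) (Set.mem_univ _) (labEnds_dart _ d)
    refine P.trans {d | edgeReach (labEnds P.face) Set.univ (P.face P.base) (P.face d)} ?_ ?_ ?_ ?_
    · exact Relation.ReflTransGen.refl
    · intro d hd
      simp only [Set.mem_ofPred_eq, P.face_σ] at hd ⊢
      exact hd.trans (hr d)
    · intro d hd
      simp only [Set.mem_ofPred_eq, P.face_σ] at hd ⊢
      exact hd.trans (reach_symm (hr d))
    · intro d hd
      exact Relation.ReflTransGen.trans hd (hr d)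
  intro u v
  obtain ⟨d, rfl⟩ := P.fsurj u
  obtain ⟨d', rfl⟩ := P.fsurj v
  exact (reach_symm (h d)).trans (h d')

theorem orth [Fintype P.E] (g : P.V → ZMod 2) (f : P.F → ZMod 2) :
    ∑ e, cob (fun e => P.vert (e, false)) (fun e => P.vert (e, true)) g e *
      cob (fun e => P.face (e, false)) (fun e => P.face (e, true)) f e = 0 := by
  have h1 : ∑ d : P.E × Bool, g (P.vert d) * f (P.face (rev d)) =
      ∑ d : P.E × Bool, g (P.vert d) * f (P.face d) := by
    rw [← Equiv.sum_comp P.σ (fun d => g (P.vert d) * f (P.face d))]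
    refine Finset.sum_congr rfl fun d _ => ?_
    rw [P.vert_σ, P.face_σ]
  have h2 : ∀ x : ZMod 2, x + x = 0 := by decide
  have h3 := h2 (∑ d : P.E × Bool, g (P.vert d) * f (P.face d))
  nth_rewrite 1 [← h1] at h3
  rw [Fintype.sum_prod_type, Fintype.sum_prod_type, ← Finset.sum_add_distrib] at h3
  rw [← h3]
  refine Finset.sum_congr rfl fun e _ => ?_
  simp only [cob, LinearMap.coe_mk, AddHom.coe_mk, Fintype.sum_bool, rev]
  simp only [Bool.not_true, Bool.not_false]
  ring

/-- The plane dual pair of a planar map. -/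
def toPair : PlaneDualPair where
  V := P.V
  F := P.F
  E := P.E
  neV := ⟨P.vert P.base⟩
  neF := ⟨P.face P.base⟩
  ends := labEnds P.vert
  dualEnds := labEnds P.face
  conn := P.connV
  dual_conn := P.connF
  acyclic_iff_dual_conn := by
    classical
    intro S
    have := Fintype.ofFinite P.V
    have := Fintype.ofFinite P.F
    have := Fintype.ofFinite P.E
    have : Nonempty P.V := ⟨P.vert P.base⟩
    have : Nonempty P.F := ⟨P.face P.base⟩
    have he := P.euler
    simp only [Nat.card_eq_fintype_card] at he
    exact duality_half P.connV P.connF P.orth he S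
  conn_iff_dual_acyclic := by
    classical
    intro S
    have := Fintype.ofFinite P.V
    have := Fintype.ofFinite P.F
    have := Fintype.ofFinite P.E
    have : Nonempty P.V := ⟨P.vert P.base⟩
    have : Nonempty P.F := ⟨P.face P.base⟩
    have he := P.euler
    simp only [Nat.card_eq_fintype_card] at he
    have := duality_half P.connF P.connV (fun f g => by
      have := P.orth g f
      simpa only [mul_comm] using this) (by omega) Sᶜ
    rw [compl_compl] at this
    exact this.symm

end PMap

section contour

variable {V E : Type} (lab : E × Bool → V) (T : Set E) (c : ℕ → E × Bool)

/-- crossing lemma for the contour walk -/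
theorem cross (hin : ∀ s, (c s).1 ∈ T → lab (c (s + 1)) = lab (rev (c s)))
    (hout : ∀ s, (c s).1 ∉ T → lab (c (s + 1)) = lab (c s)) {e : E} {X : Set V}
    (hX : ∀ e' ∈ T \ {e}, ∀ u v, labEnds lab e' = s(u, v) → u ∈ X → v ∈ X)
    {s s' : ℕ} (hs : s ≤ s') (h : lab (c s) ∈ X) (h' : lab (c s') ∉ X) :
    ∃ r, s ≤ r ∧ r < s' ∧ (c r).1 = e ∧ lab (c r) ∈ X := by
  obtain ⟨k, rfl⟩ := Nat.exists_eq_add_of_le hs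
  clear hs
  induction k with
  | zero => exact absurd h h'
  | succ k ih =>
    by_cases hk : lab (c (s + k)) ∈ X
    · refine ⟨s + k, by omega, by omega, ?_, hk⟩
      by_contra hne
      apply h'
      rw [← add_assoc]
      by_cases hT : (c (s + k)).1 ∈ T
      · rw [hin _ hT]
        exact hX (c (s + k)).1 ⟨hT, hne⟩ _ _ (labEnds_dart lab _) hk
      · rw [hout _ hT]; exact hk
    · obtain ⟨r, h1, h2, h3⟩ := ih hk
      exact ⟨r, h1, by omega, h3⟩

/-- component of `u` after deleting the edge `e` -/
def comp (e : E) (u : V) : Set V := {w | edgeReach (labEnds lab) (T \ {e}) u w}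

theorem comp_closed (e : E) (u : V) :
    ∀ e' ∈ T \ {e}, ∀ x y, labEnds lab e' = s(x, y) → x ∈ comp lab T e u → y ∈ comp lab T e u :=
  fun e' he' x y hs hx => Relation.ReflTransGen.tail hx ⟨e', he', hs⟩

theorem compl_closed (e : E) (u : V) :
    ∀ e' ∈ T \ {e}, ∀ x y, labEnds lab e' = s(x, y) →
      x ∈ (comp lab T e u)ᶜ → y ∈ (comp lab T e u)ᶜ :=
  fun e' he' x y hs hx hy => hx (Relation.ReflTransGen.tail hy ⟨e', he', by rw [hs, Sym2.eq_swap]⟩)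

/-- the orbit of the contour is closed under reversal of tree darts -/
theorem orbit_rev (hac : edgeAcyclic (labEnds lab) T)
    (hin : ∀ s, (c s).1 ∈ T → lab (c (s + 1)) = lab (rev (c s)))
    (hout : ∀ s, (c s).1 ∉ T → lab (c (s + 1)) = lab (c s)) {N : ℕ} (hN : 0 < N)
    (hper : ∀ s, c (s + N) = c s) (s0 : ℕ) (hT : (c s0).1 ∈ T) : ∃ s, c s = rev (c s0) := by
  set a := c s0 with ha
  have hna : lab a ∉ comp lab T a.1 (lab (rev a)) := by
    intro h
    exact hac a.1 hT _ _ (labEnds_dart lab a) (reach_symm h)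
  obtain ⟨r, h1, h2, h3, h4⟩ := cross lab T c hin hout (comp_closed lab T a.1 (lab (rev a)))
    (s := s0 + 1) (s' := s0 + N) (by omega)
    (by rw [hin s0 hT]; exact Relation.ReflTransGen.refl) (by rw [hper]; exact hna)
  refine ⟨r, ?_⟩
  rcases eq_or_rev h3 with h | h
  · rw [h] at h4; exact absurd h4 hna
  · exact h

/-- visited darts -/
def Vis (t : ℕ) : Set (E × Bool) := {d | ∃ s < t, c s = d}

/-- half visited edges -/
def Half (t : ℕ) : Set E := {e | ∃ d ∈ Vis c t, rev d ∉ Vis c t ∧ d.1 = e}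

theorem half_sep (hac : edgeAcyclic (labEnds lab) T)
    (hin : ∀ s, (c s).1 ∈ T → lab (c (s + 1)) = lab (rev (c s)))
    (hout : ∀ s, (c s).1 ∉ T → lab (c (s + 1)) = lab (c s)) {t : ℕ} {e : E} (hT : e ∈ T)
    (he : e ∈ Half c t) : ¬ edgeReach (labEnds lab) (T \ {e}) (lab (c 0)) (lab (c t)) := by
  intro hr
  obtain ⟨a, ⟨s, hst, hs⟩, hnv, hae⟩ := he
  have hboth : ¬ (lab a ∈ comp lab T e (lab (c 0)) ∧ lab (rev a) ∈ comp lab T e (lab (c 0))) := by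
    rintro ⟨h1, h2⟩
    refine hac e hT (lab a) (lab (rev a)) ?_ ((reach_symm h1).trans h2)
    rw [← hae]; exact labEnds_dart lab a
  have hcs : lab (c (s + 1)) = lab (rev a) := by
    rw [hin s (by rw [hs, hae]; exact hT), hs]
  by_cases hX : lab a ∈ comp lab T e (lab (c 0))
  · obtain ⟨r, h1, h2, h3, h4⟩ := cross lab T c hin hout (compl_closed lab T e (lab (c 0)))
      (s := s + 1) (s' := t) (by omega) (by rw [hcs]; exact fun h => hboth ⟨hX, h⟩)
      (fun h => h hr)
    rcases eq_or_rev (h3.trans hae.symm) with h | h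
    · rw [h] at h4; exact h4 hX
    · exact hnv ⟨r, h2, h⟩
  · obtain ⟨r, h1, h2, h3, h4⟩ := cross lab T c hin hout (comp_closed lab T e (lab (c 0)))
      (s := 0) (s' := s) (by omega) Relation.ReflTransGen.refl (by rw [hs]; exact hX)
    rcases eq_or_rev (h3.trans hae.symm) with h | h
    · rw [h] at h4; exact hX h4
    · exact hnv ⟨r, by omega, h⟩

theorem half_vertex (hcon : edgeConn (labEnds lab) T) (hac : edgeAcyclic (labEnds lab) T)
    (hin : ∀ s, (c s).1 ∈ T → lab (c (s + 1)) = lab (rev (c s)))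
    (hout : ∀ s, (c s).1 ∉ T → lab (c (s + 1)) = lab (c s)) {N : ℕ}
    (hper : c N = c 0) (hinj : ∀ s < N, ∀ s' < N, c s = c s' → s = s')
    (hsurj : ∀ d, ∃ s < N, c s = d) {t : ℕ} {d1 d2 : E × Bool} (h12 : lab d1 = lab d2)
    (hd1 : d1 ∈ Vis c t) (hd2 : d2 ∉ Vis c t) (hne : lab d1 ≠ lab (c 0)) :
    ∃ e ∈ Half c t, lab d1 ∈ labEnds lab e := by
  set u := lab d1 with hu
  -- the tree edge at `u` pointing towards the start
  have hex : ∃ e ∈ T, ∃ w, labEnds lab e = s(w, u) ∧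
      edgeReach (labEnds lab) (T \ {e' | u ∈ labEnds lab e'}) (lab (c 0)) w := by
    by_contra hcontra
    push Not at hcontra
    have huY : ¬ edgeReach (labEnds lab) (T \ {e' | u ∈ labEnds lab e'}) (lab (c 0)) u := by
      intro h
      have := reach_closed (X := {u}ᶜ) ?_ h (fun h => hne h.symm)
      · exact this rfl
      · rintro e' ⟨_, he'⟩ x y hs hx rfl
        apply he'
        rw [Set.mem_ofPred_eq, hs]; simp
    apply huY
    refine reach_closed (S := T)
      (X := {w | edgeReach (labEnds lab) (T \ {e' | u ∈ labEnds lab e'}) (lab (c 0)) w}) ?_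
      (hcon (lab (c 0)) u) Relation.ReflTransGen.refl
    intro e' he' x y hs hx
    by_cases hmem : u ∈ labEnds lab e'
    · exfalso
      rw [hs, Sym2.mem_iff] at hmem
      rcases hmem with h | h
      · rw [← h] at hx; exact huY hx
      · rw [← h] at hs; exact hcontra e' he' x hs hx
    · exact Relation.ReflTransGen.tail hx ⟨e', ⟨he', hmem⟩, hs⟩
  obtain ⟨e, heT, w, hew, hY⟩ := hex
  have hv0 : lab (c 0) ∉ comp lab T e u := by
    intro h
    have h2 : edgeReach (labEnds lab) (T \ {e}) (lab (c 0)) w := by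
      refine reach_mono ?_ hY
      rintro e' ⟨h1, h2⟩
      refine ⟨h1, ?_⟩
      rintro rfl
      apply h2
      show u ∈ labEnds lab e'
      rw [hew]; simp
    refine hac e heT w u hew (reach_symm (Relation.ReflTransGen.trans h h2))
  obtain ⟨s1, hs1t, hs1⟩ := hd1
  obtain ⟨s2, hs2N, hs2⟩ := hsurj d2
  have hs2t : t ≤ s2 := by
    by_contra h
    exact hd2 ⟨s2, by omega, hs2⟩
  obtain ⟨r, h1, h2, h3, h4⟩ := cross lab T c hin hout (compl_closed lab T e u)
      (s := 0) (s' := s1) (by omega) hv0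
      (by rw [hs1]; exact fun h => h Relation.ReflTransGen.refl)
  obtain ⟨r', h1', h2', h3', h4'⟩ := cross lab T c hin hout (comp_closed lab T e u)
      (s := s2) (s' := N) (by omega) (by rw [hs2, ← h12]; exact Relation.ReflTransGen.refl)
      (by rw [hper]; exact hv0)
  refine ⟨e, ⟨c r, ⟨r, by omega, rfl⟩, ?_, h3⟩, by rw [hew]; simp⟩
  rintro ⟨q, hq, hqe⟩
  rcases eq_or_rev (h3'.trans h3.symm) with h | h
  · rw [h] at h4'; exact h4 h4'
  · have := hinj q (by omega) r' h2' (hqe.trans h.symm)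
    omega

end contour

/-- A pair of dual trees gives a sweep-out by vertex sets with small edge boundary. -/
theorem PMap.sweep (P : PMap) (hdeg : ∀ v, {e | v ∈ labEnds P.vert e}.ncard ≤ 6) (T : Set P.E)
    (hT : IsSpanningTree (labEnds P.vert) T) :
    ∃ (N : ℕ) (A : ℕ → Set P.V), Monotone A ∧ A 0 = ∅ ∧ A N = Set.univ ∧
      (∀ t, ∃ w, A (t + 1) ⊆ insert w (A t)) ∧
      ∀ t, t < N → {e | ∃ u v, labEnds P.vert e = s(u, v) ∧ u ∈ A t ∧ v ∉ A t}.ncard ≤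
        13 * (edgeDiam (labEnds P.vert) T + edgeDiam (labEnds P.face) Tᶜ) + 6 := by
  classical
  obtain ⟨hcon, hac⟩ := hT
  have hcon' : edgeConn (labEnds P.face) Tᶜ := (P.toPair.acyclic_iff_dual_conn T).1 hac
  have hac' : edgeAcyclic (labEnds P.face) Tᶜ := (P.toPair.conn_iff_dual_acyclic T).1 hcon
  let τ : P.E × Bool → P.E × Bool := fun d => if d.1 ∈ T then P.σ (rev d) else P.σ d
  have hτinj : Function.Injective τ := by
    intro d d' h
    simp only [τ] at h
    split_ifs at h with h1 h2 h2
    · have := P.σ.injective h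
      rw [← rev_rev d, this, rev_rev]
    · have := P.σ.injective h
      rw [← this] at h2; exact absurd h1 h2
    · have := P.σ.injective h
      rw [this] at h1; exact absurd h2 h1
    · exact P.σ.injective h
  let c : ℕ → P.E × Bool := fun s => τ^[s] P.base
  have hstep : ∀ s, c (s + 1) = τ (c s) := fun s => Function.iterate_succ_apply' _ _ _
  set N := Function.minimalPeriod τ P.base with hN
  have hNpos : 0 < N := Function.minimalPeriod_pos_of_mem_periodicPts
    (hτinj.mem_periodicPts P.base)
  have hper : ∀ s, c (s + N) = c s := fun s => by
    simp only [c]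
    rw [Function.iterate_add_apply, Function.iterate_minimalPeriod]
  have hinj : ∀ s < N, ∀ s' < N, c s = c s' → s = s' := fun s hs s' hs' h =>
    (Function.iterate_injOn_Iio_minimalPeriod (f := τ) (x := P.base)) hs hs' h
  have hin : ∀ s, (c s).1 ∈ T → P.vert (c (s + 1)) = P.vert (rev (c s)) := by
    intro s h
    rw [hstep]; simp only [τ, if_pos h, P.vert_σ]
  have hout : ∀ s, (c s).1 ∉ T → P.vert (c (s + 1)) = P.vert (c s) := by
    intro s h
    rw [hstep]; simp only [τ, if_neg h, P.vert_σ]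
  have hin' : ∀ s, (c s).1 ∈ Tᶜ → P.face (c (s + 1)) = P.face (rev (c s)) := by
    intro s h
    rw [hstep]; simp only [τ, if_neg (show (c s).1 ∉ T from h), P.face_σ]
  have hout' : ∀ s, (c s).1 ∉ Tᶜ → P.face (c (s + 1)) = P.face (c s) := by
    intro s h
    have h' : (c s).1 ∈ T := by simpa using h
    rw [hstep]; simp only [τ, if_pos h', P.face_σ, rev_rev]
  have hrev : ∀ s, ∃ s', c s' = rev (c s) := by
    intro s
    by_cases h : (c s).1 ∈ T
    · exact orbit_rev P.vert T c hac hin hout hNpos hper s h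
    · exact orbit_rev P.face Tᶜ c hac' hin' hout' hNpos hper s h
  have hmod : ∀ s, ∃ s' < N, c s' = c s := by
    intro s
    refine ⟨s % N, Nat.mod_lt _ hNpos, ?_⟩
    exact Function.iterate_mod_minimalPeriod_eq
  have hsucc : ∀ s, ∃ s', P.σ (c s) = c s' := by
    intro s
    by_cases h : (c s).1 ∈ T
    · obtain ⟨s', hs'⟩ := hrev s
      refine ⟨s' + 1, ?_⟩
      rw [hstep, hs']
      simp only [τ, rev_fst, if_pos h, rev_rev]
    · exact ⟨s + 1, by rw [hstep]; simp only [τ, if_neg h]⟩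
  have hall : ∀ d, ∃ s, c s = d := by
    have hclosed : ∀ d ∈ Set.range c, P.σ d ∈ Set.range c := by
      rintro _ ⟨s, rfl⟩
      obtain ⟨s', hs'⟩ := hsucc s
      exact ⟨s', hs'.symm⟩
    refine P.trans (Set.range c) ⟨0, rfl⟩ hclosed ?_ ?_
    · intro d hd
      have hfin : (Set.range c).Finite := Set.toFinite _
      have : P.σ '' Set.range c = Set.range c := by
        refine Set.eq_of_subset_of_ncard_le ?_ ?_ hfin
        · rintro _ ⟨d, hd, rfl⟩; exact hclosed d hd
        · rw [Set.ncard_image_of_injective _ P.σ.injective]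
      rw [← this] at hd
      obtain ⟨d', hd', he⟩ := hd
      rwa [← P.σ.injective he]
    · rintro _ ⟨s, rfl⟩
      obtain ⟨s', hs'⟩ := hrev s
      exact ⟨s', hs'⟩
  have hsurj : ∀ d, ∃ s < N, c s = d := by
    intro d
    obtain ⟨s, rfl⟩ := hall d
    exact hmod s
  have hvis_mono : ∀ {t t'}, t ≤ t' → Vis c t ⊆ Vis c t' := by
    rintro t t' h d ⟨s, hs, rfl⟩
    exact ⟨s, by omega, rfl⟩
  refine ⟨N, fun t => P.vert '' Vis c t, ?_, ?_, ?_, ?_, ?_⟩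
  · intro t t' h
    exact Set.image_mono (hvis_mono h)
  · ext v; simp [Vis]
  · ext v
    simp only [Set.mem_univ, iff_true]
    obtain ⟨d, rfl⟩ := P.vsurj v
    obtain ⟨s, hs, rfl⟩ := hsurj d
    exact ⟨c s, ⟨s, hs, rfl⟩, rfl⟩
  · intro t
    refine ⟨P.vert (c t), ?_⟩
    rintro _ ⟨d, ⟨s, hs, rfl⟩, rfl⟩
    rcases Nat.lt_succ_iff_lt_or_eq.1 hs with h | rfl
    · exact Or.inr ⟨c s, ⟨s, h, rfl⟩, rfl⟩
    · exact Or.inl rfl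
  · intro t htN
    -- half visited edges
    have hH : (Half c t).ncard ≤ edgeDiam (labEnds P.vert) T + edgeDiam (labEnds P.face) Tᶜ := by
      have h1 := separating_card hcon (P.vert (c 0)) (P.vert (c t)) (Half c t ∩ T)
        (fun e he => half_sep P.vert T c hac hin hout he.2 he.1)
      have h2 := separating_card hcon' (P.face (c 0)) (P.face (c t)) (Half c t ∩ Tᶜ)
        (fun e he => half_sep P.face Tᶜ c hac' hin' hout' he.2 he.1)
      have h3 := Set.ncard_union_le (Half c t ∩ T) (Half c t ∩ Tᶜ)
      rw [Set.inter_union_compl] at h3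
      omega
    have hfin : (Half c t).Finite := Set.toFinite _
    let HF : Finset P.E := hfin.toFinset
    have hHF : HF.card = (Half c t).ncard := (Set.ncard_eq_toFinset_card _ hfin).symm
    have := Fintype.ofFinite P.E
    let HV : Finset P.V := insert (P.vert (c 0))
      (HF.biUnion fun e => {P.vert (e, false), P.vert (e, true)})
    have hHV : HV.card ≤ HF.card * 2 + 1 := by
      refine (Finset.card_insert_le _ _).trans ?_
      have := Finset.card_biUnion_le_card_mul HF
        (fun e => ({P.vert (e, false), P.vert (e, true)} : Finset P.V)) 2
        (fun e _ => Finset.card_le_two)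
      omega
    let CF : Finset P.E := HF ∪ HV.biUnion fun v => Finset.univ.filter (fun e => v ∈ labEnds P.vert e)
    have hCF : CF.card ≤ HF.card + HV.card * 6 := by
      refine (Finset.card_union_le _ _).trans ?_
      have := Finset.card_biUnion_le_card_mul HV
        (fun v => Finset.univ.filter (fun e => v ∈ labEnds P.vert e)) 6
        (fun v _ => by
          have h := hdeg v
          rw [Set.ncard_eq_toFinset_card'] at h
          refine le_trans (Finset.card_le_card ?_) h
          intro e he
          simpa using he)
      omega
    have hsub : {e | ∃ u v, labEnds P.vert e = s(u, v) ∧ u ∈ P.vert '' Vis c t ∧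
        v ∉ P.vert '' Vis c t} ⊆ (CF : Set P.E) := by
      rintro e ⟨u, v, huv, ⟨d1, hd1, rfl⟩, hv⟩
      have hd : ∃ d : P.E × Bool, d.1 = e ∧ P.vert d = P.vert d1 ∧ P.vert (rev d) = v := by
        simp only [labEnds, Sym2.eq_iff] at huv
        rcases huv with ⟨h1, h2⟩ | ⟨h1, h2⟩
        · exact ⟨(e, false), rfl, h1, h2⟩
        · exact ⟨(e, true), rfl, h2, h1⟩
      obtain ⟨d, hde, hdu, hdv⟩ := hd
      have hrd : rev d ∉ Vis c t := fun h => hv ⟨rev d, h, hdv⟩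
      by_cases hdvis : d ∈ Vis c t
      · have : e ∈ HF := by
          simp only [HF, Set.Finite.mem_toFinset]
          exact ⟨d, hdvis, hrd, hde⟩
        simp only [CF, Finset.coe_union]
        exact Or.inl this
      · have hHVmem : P.vert d1 ∈ HV := by
          by_cases hv0 : P.vert d1 = P.vert (c 0)
          · rw [hv0]; exact Finset.mem_insert_self _ _
          · obtain ⟨e', he', hmem⟩ := half_vertex P.vert T c hcon hac hin hout
              (by simpa using hper 0) hinj hsurj hdu.symm hd1 hdvis hv0
            apply Finset.mem_insert_of_mem
            rw [Finset.mem_biUnion]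
            refine ⟨e', by simpa [HF] using he', ?_⟩
            simpa [labEnds] using hmem
        have : e ∈ HV.biUnion fun v => Finset.univ.filter (fun e => v ∈ labEnds P.vert e) := by
          rw [Finset.mem_biUnion]
          refine ⟨P.vert d1, hHVmem, ?_⟩
          simp [huv]
        simp only [CF, Finset.coe_union]
        exact Or.inr this
    have := Set.ncard_le_ncard hsub CF.finite_toSet
    rw [Set.ncard_coe_finset] at this
    refine le_trans this ?_
    omega

end DualTree


set_option linter.unusedSectionVars false
set_option linter.unusedVariables false

namespace DualTree

/-- Non-crossing matchings all of whose regions have at most two children. -/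
inductive DT
  | nil
  | one (d : DT)
  | two (d e : DT)

namespace DT

/-- number of points matched -/
def len : DT → ℕ
  | nil => 0
  | one d => len d + 2
  | two d e => len d + len e + 4

/-- partner of a point -/
def mt : DT → ℕ → ℕ
  | nil, i => i
  | one d, i => if i = 0 then len d + 1 else if i < len d + 1 then mt d (i - 1) + 1 else 0
  | two d e, i => if i = 0 then len d + 1 else if i < len d + 1 then mt d (i - 1) + 1
      else if i = len d + 1 then 0
      else if i = len d + 2 then len d + len e + 3
      else if i < len d + len e + 3 then mt e (i - (len d + 3)) + (len d + 3) else len d + 2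

/-- label of the region containing the gap before point `g` -/
def enc : DT → ℕ → ℕ
  | nil, _ => 0
  | one d, g => if g = 0 then 0 else if g < len d + 2 then enc d (g - 1) + 1 else 0
  | two d e, g => if g = 0 then 0 else if g < len d + 2 then enc d (g - 1) + 1
      else if g = len d + 2 then 0
      else if g < len d + len e + 4 then enc e (g - (len d + 3)) + (len d + 3) else 0

/-- rank of the gap in its region -/
def rk : DT → ℕ → ℕ
  | nil, _ => 0
  | one d, g => if g = 0 then 0 else if g < len d + 2 then rk d (g - 1) else 1
  | two d e, g => if g = 0 then 0 else if g < len d + 2 then rk d (g - 1)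
      else if g = len d + 2 then 1
      else if g < len d + len e + 4 then rk e (g - (len d + 3)) else 2

theorem mt_lt (d : DT) : ∀ i < d.len, d.mt i < d.len := by
  induction d with
  | nil => simp [len]
  | one d ih =>
    intro i hi
    simp only [len, mt] at hi ⊢
    have := ih (i - 1)
    split_ifs <;> omega
  | two d e ihd ihe =>
    intro i hi
    simp only [len, mt] at hi ⊢
    have := ihd (i - 1)
    have := ihe (i - (len d + 3))
    split_ifs <;> omega

theorem mt_mt (d : DT) : ∀ i < d.len, d.mt (d.mt i) = i := by
  induction d with
  | nil => simp [len]
  | one d ih =>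
    intro i hi
    simp only [len] at hi
    by_cases h0 : i = 0
    · subst h0; simp [mt]
    by_cases h1 : i < len d + 1
    · have h2 := ih (i - 1) (by omega)
      have h3 := mt_lt d (i - 1) (by omega)
      have h4 : mt (one d) i = mt d (i - 1) + 1 := by simp [mt, h0, h1]
      rw [h4]
      simp only [mt]
      rw [if_neg (by omega), if_pos (by omega), Nat.add_sub_cancel, h2]
      omega
    · have : i = len d + 1 := by omega
      subst this; simp [mt]
  | two d e ihd ihe =>
    intro i hi
    simp only [len] at hi
    by_cases h0 : i = 0
    · subst h0; simp [mt]
    by_cases h1 : i < len d + 1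
    · have h2 := ihd (i - 1) (by omega)
      have h3 := mt_lt d (i - 1) (by omega)
      have h4 : mt (two d e) i = mt d (i - 1) + 1 := by simp [mt, h0, h1]
      rw [h4]
      simp only [mt]
      rw [if_neg (by omega), if_pos (by omega), Nat.add_sub_cancel, h2]
      omega
    by_cases h2 : i = len d + 1
    · subst h2; simp [mt]
    by_cases h3 : i = len d + 2
    · subst h3
      have h4 : mt (two d e) (len d + 2) = len d + len e + 3 := by simp [mt]
      have h7 : mt (two d e) (len d + len e + 3) = len d + 2 := by
        simp only [mt]
        rw [if_neg (by omega), if_neg (by omega), if_neg (by omega), if_neg (by omega),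
          if_neg (by omega)]
      rw [h4, h7]
    by_cases h4 : i < len d + len e + 3
    · have h5 := ihe (i - (len d + 3)) (by omega)
      have h6 := mt_lt e (i - (len d + 3)) (by omega)
      have h7 : mt (two d e) i = mt e (i - (len d + 3)) + (len d + 3) := by
        simp [mt, h0, h1, h2, h3, h4]
      rw [h7]
      simp only [mt]
      rw [if_neg (by omega), if_neg (by omega), if_neg (by omega), if_neg (by omega),
        if_pos (by omega), Nat.add_sub_cancel, h5]
      omega
    · have : i = len d + len e + 3 := by omega
      subst this
      have h5 : mt (two d e) (len d + 2) = len d + len e + 3 := by simp [mt]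
      have h7 : mt (two d e) (len d + len e + 3) = len d + 2 := by
        simp only [mt]
        rw [if_neg (by omega), if_neg (by omega), if_neg (by omega), if_neg (by omega),
          if_neg (by omega)]
      rw [h7, h5]

theorem mt_ne (d : DT) : ∀ i < d.len, d.mt i ≠ i := by
  induction d with
  | nil => simp [len]
  | one d ih =>
    intro i hi
    simp only [len, mt] at hi ⊢
    have := ih (i - 1)
    split_ifs <;> omega
  | two d e ihd ihe =>
    intro i hi
    simp only [len, mt] at hi ⊢
    have := ihd (i - 1)
    have := ihe (i - (len d + 3))
    split_ifs <;> omega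

theorem enc_zero (d : DT) : d.enc 0 = 0 := by
  cases d <;> simp [enc]

theorem enc_len (d : DT) : d.enc d.len = 0 := by
  cases d <;> simp [enc, len] <;> omega

theorem enc_open (d : DT) : ∀ i < d.len, i < d.mt i → d.enc (i + 1) = i + 1 := by
  induction d with
  | nil => simp [len]
  | one d ih =>
    intro i hi h
    simp only [len] at hi
    simp only [mt] at h
    simp only [enc]
    have h1 := ih (i - 1)
    have h2 := enc_zero d
    by_cases h0 : i = 0
    · subst h0; simp [h2]
    · have h3 : i - 1 + 1 = i + 1 - 1 := by omega
      rw [h3] at h1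
      split_ifs at h ⊢ <;> omega
  | two d e ihd ihe =>
    intro i hi h
    simp only [len] at hi
    simp only [mt] at h
    simp only [enc]
    have h1 := ihd (i - 1)
    have h1' := ihe (i - (len d + 3))
    have h2 := enc_zero d
    have h2' := enc_zero e
    by_cases h0 : i = 0
    · subst h0; simp [h2]
    · have h3 : i - 1 + 1 = i + 1 - 1 := by omega
      rw [h3] at h1
      by_cases h4 : i = len d + 2
      · subst h4
        have : len d + 2 + 1 - (len d + 3) = 0 := by omega
        rw [this, h2']
        split_ifs <;> omega
      · by_cases h5 : len d + 3 ≤ i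
        · have h6 : i - (len d + 3) + 1 = i + 1 - (len d + 3) := by omega
          rw [h6] at h1'
          split_ifs at h ⊢ <;> omega
        · split_ifs at h ⊢ <;> omega

theorem enc_label (d : DT) : ∀ g ≤ d.len, ∀ j, d.enc g = j + 1 → j < d.len ∧ j < d.mt j := by
  induction d with
  | nil => simp [enc]
  | one d ih =>
    intro g hg j h
    simp only [len] at hg
    simp only [enc] at h
    simp only [len, mt]
    split_ifs at h with h0 h1
    have h2 := ih (g - 1) (by omega) (j - 1)
    by_cases hj : j = 0
    · subst hj; simp
    · have := h2 (by omega)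
      split_ifs <;> omega
  | two d e ihd ihe =>
    intro g hg j h
    simp only [len] at hg
    simp only [enc] at h
    simp only [len, mt]
    split_ifs at h with h0 h1 h1' h1''
    · have h2 := ihd (g - 1) (by omega) (j - 1)
      by_cases hj : j = 0
      · subst hj; simp
      · have := h2 (by omega)
        split_ifs <;> omega
    · have h2 := ihe (g - (len d + 3)) (by omega) (j - (len d + 3))
      by_cases hj : j = len d + 2
      · subst hj; simp; omega
      · have := h2 (by omega)
        split_ifs <;> omega

theorem enc_mt (d : DT) : ∀ i < d.len, d.enc (i + 1) = d.enc (d.mt i) := by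
  induction d with
  | nil => simp [len]
  | one d ih =>
    intro i hi
    simp only [len] at hi
    by_cases h0 : i = 0
    · subst h0
      have h2 := enc_zero d
      have h3 := enc_len d
      simp [mt, enc, h2, h3]
    by_cases h1 : i < len d + 1
    · have h2 := ih (i - 1) (by omega)
      have h3 := mt_lt d (i - 1) (by omega)
      have h4 : mt (one d) i = mt d (i - 1) + 1 := by simp [mt, h0, h1]
      rw [h4]
      have h5 : i - 1 + 1 = i := by omega
      rw [h5] at h2
      simp only [enc]
      rw [if_neg (by omega), if_pos (by omega), if_neg (by omega), if_pos (by omega),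
        Nat.add_sub_cancel, Nat.add_sub_cancel, h2]
    · have : i = len d + 1 := by omega
      subst this; simp [mt, enc]
  | two d e ihd ihe =>
    intro i hi
    simp only [len] at hi
    have z1 := enc_zero d
    have z2 := enc_len d
    have z3 := enc_zero e
    have z4 := enc_len e
    by_cases h0 : i = 0
    · subst h0
      simp [mt, enc, z1, z2]
    by_cases h1 : i < len d + 1
    · have h2 := ihd (i - 1) (by omega)
      have h3 := mt_lt d (i - 1) (by omega)
      have h4 : mt (two d e) i = mt d (i - 1) + 1 := by simp [mt, h0, h1]
      rw [h4]
      have h5 : i - 1 + 1 = i := by omega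
      rw [h5] at h2
      simp only [enc]
      rw [if_neg (by omega), if_pos (by omega), if_neg (by omega), if_pos (by omega),
        Nat.add_sub_cancel, Nat.add_sub_cancel, h2]
    by_cases h2 : i = len d + 1
    · subst h2; simp [mt, enc]
    by_cases h3 : i = len d + 2
    · subst h3
      have h4 : mt (two d e) (len d + 2) = len d + len e + 3 := by simp [mt]
      rw [h4]
      have h5 : len d + len e + 3 - (len d + 3) = len e := by omega
      simp only [enc]
      rw [if_neg (by omega), if_neg (by omega), if_neg (by omega), if_pos (by omega),
        if_neg (by omega), if_neg (by omega)]
      by_cases h6 : len d + len e + 3 = len d + 2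
      · omega
      · rw [if_neg h6, if_pos (by omega), h5, z4]
        have : len d + 2 + 1 - (len d + 3) = 0 := by omega
        rw [this, z3]
    by_cases h4 : i < len d + len e + 3
    · have h5 := ihe (i - (len d + 3)) (by omega)
      have h6 := mt_lt e (i - (len d + 3)) (by omega)
      have h7 : mt (two d e) i = mt e (i - (len d + 3)) + (len d + 3) := by
        simp [mt, h0, h1, h2, h3, h4]
      have h8 : i - (len d + 3) + 1 = i + 1 - (len d + 3) := by omega
      rw [h8] at h5
      rw [h7]
      simp only [enc]
      rw [if_neg (by omega), if_neg (by omega), if_neg (by omega), if_pos (by omega),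
        if_neg (by omega), if_neg (by omega), if_neg (by omega), if_pos (by omega),
        Nat.add_sub_cancel, h5]
    · have : i = len d + len e + 3 := by omega
      subst this
      have h7 : mt (two d e) (len d + len e + 3) = len d + 2 := by
        simp [mt]; split_ifs <;> omega
      rw [h7]
      simp [enc]
      omega

theorem rk_le (d : DT) : ∀ g, d.rk g ≤ 2 := by
  induction d with
  | nil => simp [rk]
  | one d ih =>
    intro g
    simp only [rk]
    have := ih (g - 1)
    split_ifs <;> omega
  | two d e ihd ihe =>
    intro g
    simp only [rk]
    have := ihd (g - 1)
    have := ihe (g - (len d + 3))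
    split_ifs <;> omega

theorem enc_le (d : DT) : ∀ g ≤ d.len, d.enc g ≤ d.len := by
  intro g hg
  rcases Nat.eq_zero_or_pos (d.enc g) with h | h
  · omega
  · have := enc_label d g hg (d.enc g - 1) (by omega)
    omega

theorem rk_inj (d : DT) : ∀ g ≤ d.len, ∀ g' ≤ d.len, d.enc g = d.enc g' → d.rk g = d.rk g' →
    g = g' := by
  induction d with
  | nil => simp [len]
  | one d ih =>
    intro g hg g' hg' h h'
    simp only [len] at hg hg'
    simp only [enc] at h
    simp only [rk] at h'
    by_cases a1 : g ≤ len d + 1 ∧ g' ≤ len d + 1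
    · have := ih (g - 1) (by omega) (g' - 1) (by omega)
      split_ifs at h h' <;> omega
    · split_ifs at h h' <;> omega
  | two d e ihd ihe =>
    intro g hg g' hg' h h'
    simp only [len] at hg hg'
    simp only [enc] at h
    simp only [rk] at h'
    by_cases a1 : g ≤ len d + 1
    · have l1 := enc_le d (g - 1) (by omega)
      by_cases a2 : g' ≤ len d + 1
      · have := ihd (g - 1) (by omega) (g' - 1) (by omega)
        split_ifs at h h' <;> omega
      · split_ifs at h h' <;> omega
    · by_cases a2 : g' ≤ len d + 1
      · have l1 := enc_le d (g' - 1) (by omega)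
        split_ifs at h h' <;> omega
      · by_cases a3 : len d + 3 ≤ g ∧ len d + 3 ≤ g' ∧ g < len d + len e + 4 ∧ g' < len d + len e + 4
        · have := ihe (g - (len d + 3)) (by omega) (g' - (len d + 3)) (by omega)
          split_ifs at h h' <;> omega
        · split_ifs at h h' <;> omega

/-- iterated stalk -/
def stalk (d : DT) : ℕ → DT
  | 0 => d
  | h + 1 => one (stalk d h)

theorem stalk_len (d : DT) (h : ℕ) : (stalk d h).len = d.len + 2 * h := by
  induction h with
  | zero => rfl
  | succ h ih => simp only [stalk, len, ih]; ring

/-- the recursive family -/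
def W (h : ℕ) : ℕ → DT
  | 0 => stalk nil h
  | k + 1 => two (stalk (W h k) h) (two (stalk (W h k) h) (stalk (W h k) h))

/-- `d` occurs at offset `a` in the matching `m` -/
def At (m : ℕ → ℕ) (a : ℕ) (d : DT) : Prop := ∀ i < d.len, m (a + i) = a + d.mt i

theorem At.one {m : ℕ → ℕ} {a : ℕ} {d : DT} (h : At m a (one d)) : At m (a + 1) d := by
  intro i hi
  have := h (i + 1) (by simp only [len]; omega)
  simp only [mt] at this
  rw [if_neg (by omega), if_pos (by omega), Nat.add_sub_cancel] at this
  rw [show a + 1 + i = a + (i + 1) by ring, this]; ring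

theorem At.two_left {m : ℕ → ℕ} {a : ℕ} {d e : DT} (h : At m a (two d e)) : At m (a + 1) d := by
  intro i hi
  have := h (i + 1) (by simp only [len]; omega)
  simp only [mt] at this
  rw [if_neg (by omega), if_pos (by omega), Nat.add_sub_cancel] at this
  rw [show a + 1 + i = a + (i + 1) by ring, this]; ring

theorem At.two_right {m : ℕ → ℕ} {a : ℕ} {d e : DT} (h : At m a (two d e)) :
    At m (a + (d.len + 3)) e := by
  intro i hi
  have := h (i + (d.len + 3)) (by simp only [len]; omega)
  simp only [mt] at this
  rw [if_neg (by omega), if_neg (by omega), if_neg (by omega), if_neg (by omega),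
    if_pos (by omega), Nat.add_sub_cancel] at this
  rw [show a + (d.len + 3) + i = a + (i + (d.len + 3)) by ring, this]; ring

theorem At.stalk {m : ℕ → ℕ} {d : DT} {h : ℕ} {a : ℕ} (hA : At m a (stalk d h)) :
    At m (a + h) d ∧ ∀ i < h, m (a + i) = a + (2 * h + d.len - 1 - i) := by
  induction h generalizing a with
  | zero => exact ⟨hA, by simp⟩
  | succ h ih =>
    obtain ⟨h1, h2⟩ := ih (At.one hA)
    refine ⟨by rw [show a + (h + 1) = a + 1 + h by ring]; exact h1, ?_⟩
    intro i hi
    rcases Nat.eq_zero_or_pos i with rfl | hpos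
    · have := hA 0 (by simp only [DT.stalk, len]; omega)
      simp only [DT.stalk, mt, if_true, stalk_len] at this
      rw [this]; omega
    · have := h2 (i - 1) (by omega)
      rw [show a + i = a + 1 + (i - 1) by omega, this]
      omega

theorem W_len_succ (h k : ℕ) : (W h (k + 1)).len = 3 * (W h k).len + 6 * h + 8 := by
  simp only [W, len, stalk_len]; ring

theorem W_len (h k : ℕ) : (W h k).len + 3 * h + 4 = 3 ^ k * (5 * h + 4) := by
  induction k with
  | zero => simp only [W, stalk_len, len]; ring
  | succ k ih => rw [W_len_succ, pow_succ]; linarith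

end DT

end DualTree


set_option linter.unusedSectionVars false
set_option linter.unusedVariables false

namespace DualTree

/-- raw edges -/
inductive K
  | ring (l i : ℕ)
  | up (l i : ℕ)
  | rung (i : ℕ)

/-- a raw edge is cut by a colouring -/
def cut (m : ℕ → ℕ) (Q : ℕ → ℕ → Prop) : K → Prop
  | K.ring l i => ¬ (Q l i ↔ Q l (i + 1))
  | K.up l i => ¬ (Q l i ↔ Q (l + 1) i)
  | K.rung i => ¬ (Q 0 i ↔ Q 0 (m i))

/-- the raw edge is inside the region `[p,q)` -/
def insd (m : ℕ → ℕ) (h p q : ℕ) : K → Prop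
  | K.ring l i => l < h ∧ p ≤ i ∧ i + 1 < q
  | K.up l i => l + 1 < h ∧ p ≤ i ∧ i < q
  | K.rung i => i < m i ∧ p ≤ i ∧ m i < q

/-- edges of the line through columns `u`, `v` -/
def colfam (h u v : ℕ) : K → Prop
  | K.ring _ _ => False
  | K.up l i => l + 1 < h ∧ (i = u ∨ i = v)
  | K.rung i => i = u

/-- edges of a ring -/
def ringfam (l : ℕ) : K → Prop
  | K.ring l' _ => l' = l
  | K.up _ _ => False
  | K.rung _ => False

theorem pick (h : ℕ) (fam : ℕ → K → Prop) (good : K → Prop)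
    (hdisj : ∀ i j k, i < h → j < h → fam i k → fam j k → i = j)
    (hex : ∀ i < h, ∃ k, fam i k ∧ good k) :
    ∃ S : Finset K, S.card = h ∧ ∀ k ∈ S, good k := by
  classical
  have : Nonempty K := ⟨K.rung 0⟩
  choose! f hf using hex
  refine ⟨(Finset.range h).image f, ?_, ?_⟩
  · rw [Finset.card_image_of_injOn, Finset.card_range]
    intro i hi j hj hij
    simp only [Finset.coe_range, Set.mem_Iio] at hi hj
    have hfj := (hf j hj).1
    rw [← hij] at hfj
    exact hdisj i j _ hi hj (hf i hi).1 hfj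
  · intro k hk
    simp only [Finset.mem_image, Finset.mem_range] at hk
    obtain ⟨i, hi, rfl⟩ := hk
    exact (hf i hi).2

theorem interval_same (Q : ℕ → Prop) (p q : ℕ) (hno : ∀ i, p ≤ i → i + 1 < q → (Q i ↔ Q (i + 1))) :
    ∀ i j, p ≤ i → i < q → p ≤ j → j < q → (Q i ↔ Q j) := by
  have key : ∀ d i, p ≤ i → i + d < q → (Q i ↔ Q (i + d)) := by
    intro d
    induction d with
    | zero => intro i _ _; rfl
    | succ d ih =>
      intro i h1 h2
      rw [ih i h1 (by omega)]
      exact hno (i + d) (by omega) (by omega)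
  intro i j h1 h2 h3 h4
  rcases Nat.le_total i j with hij | hij
  · have := key (j - i) i h1 (by omega)
    rwa [Nat.add_sub_cancel' hij] at this
  · have := key (i - j) j h3 (by omega)
    rw [Nat.add_sub_cancel' hij] at this
    exact this.symm

theorem line_same (m : ℕ → ℕ) (Q : ℕ → ℕ → Prop) (h u v : ℕ) (hm : m u = v)
    (hno : ∀ k, colfam h u v k → ¬ cut m Q k) :
    ∀ l < h, (Q l u ↔ Q 0 u) ∧ (Q l v ↔ Q 0 u) := by
  intro l hl
  have hu := interval_same (fun l => Q l u) 0 h (fun i _ h2 => by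
    have := hno (K.up i u) ⟨h2, Or.inl rfl⟩
    simpa only [cut, not_not] using this) l 0 (by omega) hl le_rfl (by omega)
  have hv := interval_same (fun l => Q l v) 0 h (fun i _ h2 => by
    have := hno (K.up i v) ⟨h2, Or.inr rfl⟩
    simpa only [cut, not_not] using this) l 0 (by omega) hl le_rfl (by omega)
  have hr := hno (K.rung u) rfl
  simp only [cut, not_not, hm] at hr
  exact ⟨hu, hv.trans hr.symm⟩

/-- the leaf at `b` has a completely visited line -/
def full (h : ℕ) (Q : ℕ → ℕ → Prop) (b : ℕ) : Prop :=
  ∃ i < h, ∀ l < h, Q l (b + i) ∧ Q l (b + (2 * h - 1 - i))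

/-- there is a leaf at `b` -/
def leaf (m : ℕ → ℕ) (h b : ℕ) : Prop := ∀ i < h, m (b + i) = b + (2 * h - 1 - i)

theorem colfam_disj {h : ℕ} {u v u' v' : ℕ} {k : K} (h1 : colfam h u v k) (h2 : colfam h u' v' k) :
    u = u' ∨ u = v' ∨ v = u' ∨ v = v' := by
  cases k with
  | ring l i => exact h1.elim
  | up l i => obtain ⟨_, h1⟩ := h1; obtain ⟨_, h2⟩ := h2; omega
  | rung i => simp only [colfam] at h1 h2; omega

theorem full_mono {h : ℕ} {Q Q' : ℕ → ℕ → Prop} (hQ : ∀ l i, Q l i → Q' l i) {b : ℕ}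
    (hf : full h Q b) : full h Q' b := by
  obtain ⟨i, hi, hl⟩ := hf
  exact ⟨i, hi, fun l hlh => ⟨hQ _ _ (hl l hlh).1, hQ _ _ (hl l hlh).2⟩⟩

/-- cut edges outside of the middle part -/
theorem outside_cut (m : ℕ → ℕ) (Q : ℕ → ℕ → Prop) (h a n y w bX bZ : ℕ)
    (hy : a + h ≤ y) (hyw : y + w + h ≤ a + n)
    (hst : ∀ i < h, m (y - 1 - i) = y + w + i)
    (hX1 : a ≤ bX) (hX2 : bX + 2 * h ≤ a + n) (hX3 : bX + 2 * h ≤ y ∨ y + w ≤ bX)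
    (hZ1 : a ≤ bZ) (hZ2 : bZ + 2 * h ≤ a + n) (hZ3 : bZ + 2 * h ≤ y ∨ y + w ≤ bZ)
    (hZl : leaf m h bZ) (hX : full h Q bX) (hZ : ¬ full h Q bZ) :
    ∃ S : Finset K, S.card = h ∧
      ∀ k ∈ S, cut m Q k ∧ insd m h a (a + n) k ∧ ¬ insd m h y (y + w) k := by
  by_contra hcon
  set good : K → Prop := fun k => cut m Q k ∧ insd m h a (a + n) k ∧ ¬ insd m h y (y + w) k
    with hgood
  have hp : ∀ fam : ℕ → K → Prop, (∀ i j k, i < h → j < h → fam i k → fam j k → i = j) →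
      ∃ i < h, ∀ k, fam i k → ¬ good k := by
    intro fam hd
    by_contra hc
    push Not at hc
    exact hcon (pick h fam good hd hc)
  obtain ⟨l, hl, hring⟩ := hp (fun l => ringfam l) (by
    intro i j k _ _ h1 h2
    cases k with
    | ring l' x => simp only [ringfam] at h1 h2; omega
    | up l i => exact h1.elim
    | rung i => exact h1.elim)
  obtain ⟨i, hi, hstalk⟩ := hp (fun i => colfam h (y - 1 - i) (y + w + i)) (by
    intro i j k hi hj h1 h2
    have := colfam_disj h1 h2
    omega)
  obtain ⟨j, hj, hleaf⟩ := hp (fun i => colfam h (bZ + i) (bZ + (2 * h - 1 - i))) (by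
    intro i j k hi hj h1 h2
    have := colfam_disj h1 h2
    omega)
  have hL := interval_same (Q l) a y (by
    intro x hx1 hx2
    by_contra hc
    exact hring (K.ring l x) rfl ⟨hc, ⟨hl, by omega, by omega⟩, fun hh => by
      have := hh.2.1
      omega⟩)
  have hR := interval_same (Q l) (y + w) (a + n) (by
    intro x hx1 hx2
    by_contra hc
    exact hring (K.ring l x) rfl ⟨hc, ⟨hl, by omega, by omega⟩, fun hh => by
      have := hh.2.2
      omega⟩)
  have hS := line_same m Q h (y - 1 - i) (y + w + i) (hst i hi) (by
    intro k hk hc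
    refine hstalk k hk ⟨hc, ?_, ?_⟩
    · cases k with
      | ring l' x => exact hk.elim
      | up l' x => obtain ⟨h1, h2⟩ := hk; exact ⟨h1, by omega, by omega⟩
      | rung x =>
        simp only [colfam] at hk
        have := hst i hi
        rw [← hk] at this
        exact ⟨by omega, by omega, by omega⟩
    · cases k with
      | ring l' x => exact hk.elim
      | up l' x => obtain ⟨h1, h2⟩ := hk; intro h3; have := h3.2; omega
      | rung x =>
        simp only [colfam] at hk
        intro h3
        have := h3.2
        omega) l hl
  have hW := line_same m Q h (bZ + j) (bZ + (2 * h - 1 - j)) (hZl j hj) (by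
    intro k hk hc
    refine hleaf k hk ⟨hc, ?_, ?_⟩
    · cases k with
      | ring l' x => exact hk.elim
      | up l' x => obtain ⟨h1, h2⟩ := hk; exact ⟨h1, by omega, by omega⟩
      | rung x =>
        simp only [colfam] at hk
        have := hZl j hj
        rw [← hk] at this
        exact ⟨by omega, by omega, by omega⟩
    · cases k with
      | ring l' x => exact hk.elim
      | up l' x => obtain ⟨h1, h2⟩ := hk; intro h3; have := h3.2; omega
      | rung x =>
        simp only [colfam] at hk
        have := hZl j hj
        rw [← hk] at this
        intro h3
        have := h3.2
        omega)
  obtain ⟨x, hx, hxf⟩ := hX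
  have hQx := (hxf l hl).1
  have hLR : Q l (y - 1 - i) ↔ Q l (y + w + i) := hS.1.trans hS.2.symm
  have hyL : Q l (y - 1 - i) := by
    rcases hX3 with h3 | h3
    · exact (hL (bX + x) (y - 1 - i) (by omega) (by omega) (by omega) (by omega)).1 hQx
    · exact hLR.2 ((hR (bX + x) (y + w + i) (by omega) (by omega) (by omega) (by omega)).1 hQx)
  have hQz : Q l (bZ + j) := by
    rcases hZ3 with h3 | h3
    · exact (hL (bZ + j) (y - 1 - i) (by omega) (by omega) (by omega) (by omega)).2 hyL
    · exact (hR (bZ + j) (y + w + i) (by omega) (by omega) (by omega) (by omega)).2 (hLR.1 hyL)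
  have h0 := (hW l hl).1.1 hQz
  exact hZ ⟨j, hj, fun l' hl' => ⟨(hW l' hl').1.2 h0, (hW l' hl').2.2 h0⟩⟩

/-- base case: cut edges inside of a leaf -/
theorem leaf_cut (m : ℕ → ℕ) (Q Q' : ℕ → ℕ → Prop) (h b l₀ p₀ : ℕ)
    (hl : leaf m h b) (hstep : ∀ l i, Q' l i → Q l i ∨ (l = l₀ ∧ i = p₀))
    (hQ : ¬ full h Q b) (hQ' : full h Q' b) :
    ∃ S : Finset K, S.card = h ∧ ∀ k ∈ S, cut m Q k ∧ insd m h b (b + 2 * h) k := by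
  obtain ⟨i₀, hi₀, hf⟩ := hQ'
  have hvis : ∀ l < h, ∃ x, b ≤ x ∧ x < b + 2 * h ∧ Q l x := by
    intro l hlh
    obtain ⟨h1, h2⟩ := hf l hlh
    rcases hstep _ _ h1 with h1 | h1
    · exact ⟨_, by omega, by omega, h1⟩
    · rcases hstep _ _ h2 with h2 | h2
      · exact ⟨_, by omega, by omega, h2⟩
      · omega
  by_cases hall : ∀ l < h, ∃ x, b ≤ x ∧ x < b + 2 * h ∧ ¬ Q l x
  · refine pick h (fun l => ringfam l) _ ?_ ?_
    · intro i j k _ _ h1 h2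
      cases k with
      | ring l' x => simp only [ringfam] at h1 h2; omega
      | up l i => exact h1.elim
      | rung i => exact h1.elim
    · intro l hlh
      by_contra hc
      push Not at hc
      obtain ⟨x, hx1, hx2, hx⟩ := hvis l hlh
      obtain ⟨z, hz1, hz2, hz⟩ := hall l hlh
      refine hz ((interval_same (Q l) b (b + 2 * h) ?_ x z hx1 hx2 hz1 hz2).1 hx)
      intro i h1 h2
      by_contra hcc
      exact hc (K.ring l i) rfl hcc ⟨hlh, h1, h2⟩
  · push Not at hall
    obtain ⟨l, hlh, hall⟩ := hall
    refine pick h (fun i => colfam h (b + i) (b + (2 * h - 1 - i))) _ ?_ ?_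
    · intro i j k hi hj h1 h2
      have := colfam_disj h1 h2
      omega
    · intro i hi
      by_contra hc
      push Not at hc
      have hW := line_same m Q h (b + i) (b + (2 * h - 1 - i)) (hl i hi) (by
        intro k hk hcut
        refine hc k hk hcut ?_
        cases k with
        | ring l' x => exact hk.elim
        | up l' x => obtain ⟨h1, h2⟩ := hk; exact ⟨h1, by omega, by omega⟩
        | rung x =>
          simp only [colfam] at hk
          have := hl i hi
          rw [← hk] at this
          exact ⟨by omega, by omega, by omega⟩)
      have h0 := (hW l hlh).1.1 (hall _ (by omega) (by omega))
      exact hQ ⟨i, hi, fun l' hl' => ⟨(hW l' hl').1.2 h0, (hW l' hl').2.2 h0⟩⟩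

theorem insd_mono {m : ℕ → ℕ} {h p q p' q' : ℕ} (hp : p ≤ p') (hq : q' ≤ q) {k : K}
    (hk : insd m h p' q' k) : insd m h p q k := by
  cases k with
  | ring l i => obtain ⟨h1, h2, h3⟩ := hk; exact ⟨h1, by omega, by omega⟩
  | up l i => obtain ⟨h1, h2, h3⟩ := hk; exact ⟨h1, by omega, by omega⟩
  | rung i => obtain ⟨h1, h2, h3⟩ := hk; exact ⟨h1, by omega, by omega⟩

/-- what we prove about an interval `[a,a+n)` with `c` cut edges -/
def Good (m : ℕ → ℕ) (P : ℕ → ℕ → ℕ → Prop) (N h a n c s b : ℕ) : Prop :=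
  s < N ∧ a ≤ b ∧ b + 2 * h ≤ a + n ∧ leaf m h b ∧ ¬ full h (P s) b ∧ full h (P (s + 1)) b ∧
    ∃ S : Finset K, c ≤ S.card ∧ ∀ k ∈ S, cut m (P s) k ∧ insd m h a (a + n) k

theorem combine (m : ℕ → ℕ) (P : ℕ → ℕ → ℕ → Prop) (N h a n w c : ℕ)
    (hmono : ∀ s t, s ≤ t → ∀ l i, P s l i → P t l i)
    (x y z sX sY sZ bX bY bZ : ℕ)
    (hy : a + h ≤ y) (hyw : y + w + h ≤ a + n)
    (hx : a ≤ x) (hxw : x + w ≤ a + n) (hz : a ≤ z) (hzw : z + w ≤ a + n)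
    (hxy : x + w ≤ y ∨ y + w ≤ x) (hzy : z + w ≤ y ∨ y + w ≤ z)
    (hst : ∀ i < h, m (y - 1 - i) = y + w + i)
    (gX : Good m P N h x w c sX bX) (gY : Good m P N h y w c sY bY)
    (gZ : Good m P N h z w c sZ bZ) (h1 : sX < sY) (h2 : sY < sZ) :
    Good m P N h a n (c + h) sY bY := by
  classical
  obtain ⟨_, x1, x2, x3, x4, x5, _⟩ := gX
  obtain ⟨_, z1, z2, z3, z4, z5, _⟩ := gZ
  obtain ⟨y0, y1, y2, y3, y4, y5, S, hS, hSk⟩ := gY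
  obtain ⟨S', hS', hSk'⟩ := outside_cut m (P sY) h a n y w bX bZ hy hyw hst (by omega) (by omega)
    (by omega) (by omega) (by omega) (by omega) z3
    (full_mono (hmono _ _ (by omega)) x5) (fun hf => z4 (full_mono (hmono _ _ (by omega)) hf))
  refine ⟨y0, by omega, by omega, y3, y4, y5, S ∪ S', ?_, ?_⟩
  · rw [Finset.card_union_of_disjoint]
    · omega
    · rw [Finset.disjoint_left]
      intro k hk hk'
      exact (hSk' k hk').2.2 (hSk k hk).2
  · intro k hk
    rcases Finset.mem_union.1 hk with hk | hk
    · exact ⟨(hSk k hk).1, insd_mono (by omega) (by omega) (hSk k hk).2⟩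
    · exact ⟨(hSk' k hk).1, (hSk' k hk).2.1⟩

theorem crit_new {h b : ℕ} {Q Q' : ℕ → ℕ → Prop} (h1 : ¬ full h Q b) (h2 : full h Q' b) :
    ∃ l p, b ≤ p ∧ p < b + 2 * h ∧ Q' l p ∧ ¬ Q l p := by
  by_contra hc
  push Not at hc
  obtain ⟨i, hi, hf⟩ := h2
  exact h1 ⟨i, hi, fun l hl => ⟨hc _ _ (by omega) (by omega) (hf l hl).1,
    hc _ _ (by omega) (by omega) (hf l hl).2⟩⟩

theorem raw_bound (m : ℕ → ℕ) (P : ℕ → ℕ → ℕ → Prop) (N h L : ℕ) (hh : 0 < h)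
    (hmono : ∀ s t, s ≤ t → ∀ l i, P s l i → P t l i)
    (h0 : ∀ l i, ¬ P 0 l i) (hN : ∀ l < h, ∀ i < L, P N l i)
    (hstep : ∀ t, ∃ l₀ p₀, ∀ l i, P (t + 1) l i → P t l i ∨ (l = l₀ ∧ i = p₀)) :
    ∀ k a, DT.At m a (DT.W h k) → a + (DT.W h k).len ≤ L →
      ∃ s b, Good m P N h a (DT.W h k).len ((k + 1) * h) s b := by
  intro k
  induction k with
  | zero =>
    intro a hA haL
    have hlen : (DT.W h 0).len = 2 * h := by simp [DT.W, DT.stalk_len, DT.len]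
    have hl : leaf m h a := by
      intro i hi
      have := (DT.At.stalk (d := DT.nil) (h := h) hA).2 i hi
      simpa [DT.len] using this
    rw [hlen] at haL ⊢
    have f0 : ¬ full h (P 0) a := fun ⟨i, hi, hf⟩ => h0 _ _ (hf 0 hh).1
    have fN : full h (P N) a := ⟨0, hh, fun l hl => ⟨hN _ hl _ (by omega), hN _ hl _ (by omega)⟩⟩
    have : ∃ s < N, ¬ full h (P s) a ∧ full h (P (s + 1)) a := by
      by_contra hc
      push Not at hc
      have : ∀ t ≤ N, ¬ full h (P t) a := by
        intro t
        induction t with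
        | zero => intro _; exact f0
        | succ t ih => intro ht; exact hc t (by omega) (ih (by omega))
      exact this N le_rfl fN
    obtain ⟨s, hs, hs1, hs2⟩ := this
    obtain ⟨l₀, p₀, hst⟩ := hstep s
    obtain ⟨S, hS, hSk⟩ := leaf_cut m (P s) (P (s + 1)) h a l₀ p₀ hl hst hs1 hs2
    exact ⟨s, a, hs, le_rfl, le_rfl, hl, hs1, hs2, S, by omega, hSk⟩
  | succ k ih =>
    intro a hA haL
    have hlen := DT.W_len_succ h k
    set w := (DT.W h k).len with hw
    have hB : (DT.stalk (DT.W h k) h).len = w + 2 * h := DT.stalk_len _ _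
    have A1 := DT.At.two_left hA
    have A23 := DT.At.two_right hA
    have A2 := DT.At.two_left A23
    have A3' := DT.At.two_right A23
    rw [hB] at A23 A2 A3'
    have A3 : DT.At m (a + (w + 2 * h + 3) + (w + 2 * h + 3)) (DT.stalk (DT.W h k) h) := A3'
    have conv : ∀ c, DT.At m c (DT.stalk (DT.W h k) h) → DT.At m (c + h) (DT.W h k) ∧
        ∀ i < h, m (c + h - 1 - i) = c + h + w + i := by
      intro c hc
      obtain ⟨h1, h2⟩ := DT.At.stalk hc
      refine ⟨h1, fun i hi => ?_⟩
      have := h2 (h - 1 - i) (by omega)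
      rw [show c + h - 1 - i = c + (h - 1 - i) by omega, this]
      omega
    obtain ⟨B1, C1⟩ := conv _ A1
    obtain ⟨B2, C2⟩ := conv _ A2
    obtain ⟨B3, C3⟩ := conv _ A3
    generalize hy1 : a + 1 + h = y1 at B1 C1
    generalize hy2 : a + (w + 2 * h + 3) + 1 + h = y2 at B2 C2
    generalize hy3 : a + (w + 2 * h + 3) + (w + 2 * h + 3) + h = y3 at B3 C3
    obtain ⟨s1, b1, g1⟩ := ih y1 B1 (by omega)
    obtain ⟨s2, b2, g2⟩ := ih y2 B2 (by omega)
    obtain ⟨s3, b3, g3⟩ := ih y3 B3 (by omega)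
    have hne : ∀ x z s b b', Good m P N h x w ((k + 1) * h) s b →
        Good m P N h z w ((k + 1) * h) s b' → x + w ≤ z → False := by
      intro x z s b b' gx gz hxz
      obtain ⟨_, x1, x2, x3, x4, x5, _⟩ := gx
      obtain ⟨_, z1, z2, z3, z4, z5, _⟩ := gz
      obtain ⟨l, p, p1, p2, p3, p4⟩ := crit_new x4 x5
      obtain ⟨l', p', p1', p2', p3', p4'⟩ := crit_new z4 z5
      obtain ⟨l₀, p₀, hst⟩ := hstep s
      have e1 := (hst _ _ p3).resolve_left p4
      have e2 := (hst _ _ p3').resolve_left p4'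
      omega
    have n12 : s1 ≠ s2 := by
      rintro rfl
      exact hne _ _ _ _ _ g1 g2 (by omega)
    have n13 : s1 ≠ s3 := by
      rintro rfl
      exact hne _ _ _ _ _ g1 g3 (by omega)
    have n23 : s2 ≠ s3 := by
      rintro rfl
      exact hne _ _ _ _ _ g2 g3 (by omega)
    have key : ∀ x y z sX sY sZ bX bY bZ, a + h ≤ y → y + w + h ≤ a + (DT.W h (k + 1)).len →
        a ≤ x → x + w ≤ a + (DT.W h (k + 1)).len → a ≤ z → z + w ≤ a + (DT.W h (k + 1)).len →
        (x + w ≤ y ∨ y + w ≤ x) → (z + w ≤ y ∨ y + w ≤ z) →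
        (∀ i < h, m (y - 1 - i) = y + w + i) →
        Good m P N h x w ((k + 1) * h) sX bX → Good m P N h y w ((k + 1) * h) sY bY →
        Good m P N h z w ((k + 1) * h) sZ bZ → sX < sY → sY < sZ →
        ∃ s b, Good m P N h a (DT.W h (k + 1)).len ((k + 1 + 1) * h) s b := by
      intro x y z sX sY sZ bX bY bZ k1 k2 k3 k4 k5 k6 k7 k8 k9 k10 k11 k12 k13 k14
      refine ⟨sY, bY, ?_⟩
      have := combine m P N h a (DT.W h (k + 1)).len w ((k + 1) * h) hmono x y z sX sY sZ bX bY bZ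
        k1 k2 k3 k4 k5 k6 k7 k8 k9 k10 k11 k12 k13 k14
      rwa [show (k + 1 + 1) * h = (k + 1) * h + h by ring]
    rcases lt_or_gt_of_ne n12 with o1 | o1 <;> rcases lt_or_gt_of_ne n13 with o2 | o2 <;>
      rcases lt_or_gt_of_ne n23 with o3 | o3
    · exact key y1 y2 y3 _ _ _ _ _ _ (by omega) (by omega) (by omega) (by omega) (by omega)
        (by omega) (by omega) (by omega) C2 g1 g2 g3 o1 o3
    · exact key y1 y3 y2 _ _ _ _ _ _ (by omega) (by omega) (by omega) (by omega) (by omega)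
        (by omega) (by omega) (by omega) C3 g1 g3 g2 o2 o3
    · omega
    · exact key y3 y1 y2 _ _ _ _ _ _ (by omega) (by omega) (by omega) (by omega) (by omega)
        (by omega) (by omega) (by omega) C1 g3 g1 g2 o2 o1
    · exact key y2 y1 y3 _ _ _ _ _ _ (by omega) (by omega) (by omega) (by omega) (by omega)
        (by omega) (by omega) (by omega) C1 g2 g1 g3 o1 o2
    · omega
    · exact key y2 y3 y1 _ _ _ _ _ _ (by omega) (by omega) (by omega) (by omega) (by omega)
        (by omega) (by omega) (by omega) C3 g2 g3 g1 o3 o2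
    · exact key y3 y2 y1 _ _ _ _ _ _ (by omega) (by omega) (by omega) (by omega) (by omega)
        (by omega) (by omega) (by omega) C2 g3 g2 g1 o3 o1

end DualTree


set_option linter.unusedSectionVars false
set_option linter.unusedVariables false

namespace DualTree

/-- parameters of the construction -/
structure Par where
  h : ℕ
  M : ℕ
  d : DT
  hM : h < M
  hL : 0 < d.len
  hLM : d.len - 1 < 2 ^ (M - h)

/-- raw faces -/
inductive FR
  | ann (l i : ℕ)
  | inn (j : ℕ)
  | top

namespace Par

variable (p : Par)

/-- last position on a level -/
def t (l : ℕ) : ℕ := (p.d.len - 1) / 2 ^ (l - p.h)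

/-- parent -/
def par (l i : ℕ) : ℕ := if l < p.h then i else i / 2

/-- first child -/
def fc (l i : ℕ) : ℕ := if l < p.h then i else 2 * i

/-- last child -/
def lc (l i : ℕ) : ℕ := if l < p.h then i else min (2 * i + 1) (p.t l)

/-- cyclic successor -/
def sc (l i : ℕ) : ℕ := if i = p.t l then 0 else i + 1

/-- cyclic predecessor -/
def pr (l i : ℕ) : ℕ := if i = 0 then p.t l else i - 1

theorem t_low (l : ℕ) (hl : l ≤ p.h) : p.t l = p.d.len - 1 := by
  simp [t, Nat.sub_eq_zero_of_le hl]

theorem t_M : p.t p.M = 0 := Nat.div_eq_of_lt p.hLM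

theorem t_succ (l : ℕ) : p.t (l + 1) = if l < p.h then p.t l else p.t l / 2 := by
  split_ifs with hl
  · rw [t_low _ _ (by omega), t_low _ _ (by omega)]
  · unfold t
    rw [show l + 1 - p.h = (l - p.h) + 1 by omega, pow_succ, Nat.div_div_eq_div_mul]

theorem par_le {l i : ℕ} (hi : i ≤ p.t l) : p.par l i ≤ p.t (l + 1) := by
  have := p.t_succ l
  unfold par
  split_ifs at * <;> omega

theorem fc_le {l i : ℕ} (hi : i ≤ p.t (l + 1)) : p.fc l i ≤ p.t l := by
  have := p.t_succ l
  unfold fc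
  split_ifs at * <;> omega

theorem lc_le {l i : ℕ} (hi : i ≤ p.t (l + 1)) : p.lc l i ≤ p.t l := by
  have := p.t_succ l
  unfold lc
  split_ifs at * <;> omega

theorem par_fc {l i : ℕ} (hi : i ≤ p.t (l + 1)) : p.par l (p.fc l i) = i := by
  have := p.t_succ l
  unfold fc par
  split_ifs at * <;> omega

theorem par_lc {l i : ℕ} (hi : i ≤ p.t (l + 1)) : p.par l (p.lc l i) = i := by
  have := p.t_succ l
  unfold lc par
  split_ifs at * <;> omega

theorem sc_le {l i : ℕ} (hi : i ≤ p.t l) : p.sc l i ≤ p.t l := by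
  unfold sc; split_ifs <;> omega

theorem pr_le {l i : ℕ} (hi : i ≤ p.t l) : p.pr l i ≤ p.t l := by
  unfold pr; split_ifs <;> omega

theorem sc_pr {l i : ℕ} (hi : i ≤ p.t l) : p.sc l (p.pr l i) = i := by
  unfold pr sc; split_ifs <;> omega

theorem pr_sc {l i : ℕ} (hi : i ≤ p.t l) : p.pr l (p.sc l i) = i := by
  unfold pr sc
  by_cases h : i = p.t l
  · simp [h]
  · simp [h]

theorem pr_fc_sc {l i : ℕ} (hi : i ≤ p.t (l + 1)) :
    p.pr l (p.fc l (p.sc (l + 1) i)) = p.lc l i := by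
  have := p.t_succ l
  unfold pr fc sc lc
  split_ifs at * <;> omega

/-- not the last child -/
theorem not_lc {l i : ℕ} (hi : i ≤ p.t l) (hne : i ≠ p.lc l (p.par l i)) :
    i + 1 ≤ p.t l ∧ p.par l (i + 1) = p.par l i ∧ i + 1 = p.lc l (p.par l i) ∧
      i + 1 ≠ p.fc l (p.par l i) := by
  unfold lc par fc at *
  split_ifs at * <;> omega

theorem not_fc {l i : ℕ} (hi : i ≤ p.t l) (hne : i ≠ p.fc l (p.par l i)) :
    0 < i ∧ p.par l (i - 1) = p.par l i ∧ i - 1 ≠ p.lc l (p.par l i) := by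
  unfold lc par fc at *
  split_ifs at * <;> omega

/-- valid vertices -/
def okV (x : ℕ × ℕ) : Prop := x.1 ≤ p.M ∧ x.2 ≤ p.t x.1

/-- valid edges -/
def ok : K → Prop
  | K.ring l i => l ≤ p.M ∧ i ≤ p.t l
  | K.up l i => l < p.M ∧ i ≤ p.t l
  | K.rung i => i < p.d.len ∧ i < p.d.mt i

/-- valid faces -/
def okF : FR → Prop
  | FR.ann l i => l < p.M ∧ i ≤ p.t l
  | FR.inn 0 => True
  | FR.inn (j + 1) => j < p.d.len ∧ j < p.d.mt j
  | FR.top => True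

/-- the rung dart at a position -/
def rd (i : ℕ) : K × Bool := if i < p.d.mt i then (K.rung i, false) else (K.rung (p.d.mt i), true)

/-- raw vertex of a dart -/
def rvert : K × Bool → ℕ × ℕ
  | (K.ring l i, false) => (l, i)
  | (K.ring l i, true) => (l, p.sc l i)
  | (K.up l i, false) => (l, i)
  | (K.up l i, true) => (l + 1, p.par l i)
  | (K.rung i, false) => (0, i)
  | (K.rung i, true) => (0, p.d.mt i)

/-- raw face of a dart -/
def rface : K × Bool → FR
  | (K.ring 0 i, false) => FR.inn (p.d.enc (i + 1))
  | (K.ring (l + 1) i, false) => FR.ann l (p.lc l i)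
  | (K.ring l i, true) => if l < p.M then FR.ann l i else FR.top
  | (K.up l i, false) => FR.ann l i
  | (K.up l i, true) => FR.ann l (p.pr l i)
  | (K.rung i, false) => FR.inn (p.d.enc i)
  | (K.rung i, true) => FR.inn (p.d.enc (p.d.mt i))

/-- raw rotation -/
def rs : K × Bool → K × Bool
  | (K.ring l i, false) => if l < p.M then (K.up l i, false) else (K.ring l (p.pr l i), true)
  | (K.ring 0 i, true) => p.rd (p.sc 0 i)
  | (K.ring (l + 1) i, true) => (K.up l (p.fc l (p.sc (l + 1) i)), true)
  | (K.up l i, false) => (K.ring l (p.pr l i), true)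
  | (K.up l i, true) => if i = p.lc l (p.par l i) then (K.ring (l + 1) (p.par l i), false)
      else (K.up l (i + 1), true)
  | (K.rung i, false) => (K.ring 0 i, false)
  | (K.rung i, true) => (K.ring 0 (p.d.mt i), false)

/-- raw inverse rotation -/
def ri : K × Bool → K × Bool
  | (K.ring 0 i, false) => p.rd i
  | (K.ring (l + 1) i, false) => (K.up l (p.lc l i), true)
  | (K.ring l i, true) => if l < p.M then (K.up l (p.sc l i), false)
      else (K.ring l (p.sc l i), false)
  | (K.up l i, false) => (K.ring l i, false)
  | (K.up l i, true) => if i = p.fc l (p.par l i) then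
      (K.ring (l + 1) (p.pr (l + 1) (p.par l i)), true) else (K.up l (i - 1), true)
  | (K.rung i, false) => (K.ring 0 (p.pr 0 i), true)
  | (K.rung i, true) => (K.ring 0 (p.pr 0 (p.d.mt i)), true)

theorem le_t0 {i : ℕ} : i ≤ p.t 0 ↔ i < p.d.len := by
  have := p.hL
  rw [t_low _ _ (by omega)]
  omega

theorem rd_ok {i : ℕ} (hi : i < p.d.len) : p.ok (p.rd i).1 := by
  have h1 := p.d.mt_lt i hi
  have h2 := p.d.mt_mt i hi
  have h3 := p.d.mt_ne i hi
  unfold rd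
  split_ifs
  · exact ⟨hi, by omega⟩
  · exact ⟨h1, by omega⟩

theorem rs_ok (d : K × Bool) (hd : p.ok d.1) : p.ok (p.rs d).1 := by
  obtain ⟨k, b⟩ := d
  cases k with
  | ring l i =>
    obtain ⟨h1, h2⟩ := hd
    cases b
    · simp only [rs]
      split_ifs with h
      · exact ⟨h, h2⟩
      · exact ⟨h1, p.pr_le h2⟩
    · cases l with
      | zero => exact p.rd_ok (p.le_t0.1 (p.sc_le h2))
      | succ l => exact ⟨by omega, p.fc_le (p.sc_le h2)⟩
  | up l i =>
    obtain ⟨h1, h2⟩ := hd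
    cases b
    · exact ⟨by omega, p.pr_le h2⟩
    · simp only [rs]
      split_ifs with h
      · exact ⟨by omega, p.par_le h2⟩
      · exact ⟨by omega, (p.not_lc h2 h).1⟩
  | rung i =>
    obtain ⟨h1, h2⟩ := hd
    have h3 := p.d.mt_lt i h1
    cases b
    · exact ⟨by omega, p.le_t0.2 h1⟩
    · exact ⟨by omega, p.le_t0.2 h3⟩

theorem ri_ok (d : K × Bool) (hd : p.ok d.1) : p.ok (p.ri d).1 := by
  obtain ⟨k, b⟩ := d
  cases k with
  | ring l i =>
    obtain ⟨h1, h2⟩ := hd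
    cases b
    · cases l with
      | zero => exact p.rd_ok (p.le_t0.1 h2)
      | succ l => exact ⟨by omega, p.lc_le h2⟩
    · simp only [ri]
      split_ifs with h
      · exact ⟨h, p.sc_le h2⟩
      · exact ⟨h1, p.sc_le h2⟩
  | up l i =>
    obtain ⟨h1, h2⟩ := hd
    cases b
    · exact ⟨by omega, h2⟩
    · simp only [ri]
      split_ifs with h
      · exact ⟨by omega, p.pr_le (p.par_le h2)⟩
      · exact ⟨by omega, by omega⟩
  | rung i =>
    obtain ⟨h1, h2⟩ := hd
    have h3 := p.d.mt_lt i h1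
    cases b
    · exact ⟨by omega, p.pr_le (p.le_t0.2 h1)⟩
    · exact ⟨by omega, p.pr_le (p.le_t0.2 h3)⟩

theorem rs_rd {i : ℕ} (hi : i < p.d.len) : p.rs (p.rd i) = (K.ring 0 i, false) := by
  have h2 := p.d.mt_mt i hi
  unfold rd
  split_ifs
  · rfl
  · simp only [rs, h2]

theorem rs_ri (d : K × Bool) (hd : p.ok d.1) : p.rs (p.ri d) = d := by
  obtain ⟨k, b⟩ := d
  cases k with
  | ring l i =>
    obtain ⟨h1, h2⟩ := hd
    cases b
    · cases l with
      | zero => exact p.rs_rd (p.le_t0.1 h2)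
      | succ l => simp only [ri, rs, p.par_lc h2, if_true]
    · simp only [ri]
      split_ifs with h
      · simp only [rs, p.pr_sc h2]
      · simp only [rs, p.pr_sc h2, if_neg h]
  | up l i =>
    obtain ⟨h1, h2⟩ := hd
    cases b
    · simp only [ri, rs, if_pos h1]
    · simp only [ri]
      split_ifs with h
      · simp only [rs, p.sc_pr (p.par_le h2), ← h]
      · obtain ⟨q1, q2, q3⟩ := p.not_fc h2 h
        simp only [rs, q2, if_neg q3]
        rw [show i - 1 + 1 = i by omega]
  | rung i =>
    obtain ⟨h1, h2⟩ := hd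
    have h3 := p.d.mt_lt i h1
    have h4 := p.d.mt_mt i h1
    cases b
    · simp only [ri, rs, p.sc_pr (p.le_t0.2 h1), rd, if_pos h2]
    · simp only [ri, rs, p.sc_pr (p.le_t0.2 h3), rd, h4]
      rw [if_neg (by omega)]

theorem rvert_rd {i : ℕ} (hi : i < p.d.len) : p.rvert (p.rd i) = (0, i) := by
  have h2 := p.d.mt_mt i hi
  unfold rd
  split_ifs
  · rfl
  · simp only [rvert, h2]

theorem rface_rd {i : ℕ} (hi : i < p.d.len) : p.rface (p.rd i) = FR.inn (p.d.enc i) := by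
  have h2 := p.d.mt_mt i hi
  unfold rd
  split_ifs
  · rfl
  · simp only [rface, h2]

theorem rvert_ok (d : K × Bool) (hd : p.ok d.1) : p.okV (p.rvert d) := by
  obtain ⟨k, b⟩ := d
  cases k with
  | ring l i =>
    obtain ⟨h1, h2⟩ := hd
    cases b
    · exact ⟨h1, h2⟩
    · exact ⟨h1, p.sc_le h2⟩
  | up l i =>
    obtain ⟨h1, h2⟩ := hd
    cases b
    · exact ⟨by simp only [rvert]; omega, h2⟩
    · exact ⟨by simp only [rvert]; omega, p.par_le h2⟩
  | rung i =>
    obtain ⟨h1, h2⟩ := hd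
    have h3 := p.d.mt_lt i h1
    cases b
    · exact ⟨by simp only [rvert]; omega, p.le_t0.2 h1⟩
    · exact ⟨by simp only [rvert]; omega, p.le_t0.2 h3⟩

theorem okF_inn {g : ℕ} (hg : g ≤ p.d.len) : p.okF (FR.inn (p.d.enc g)) := by
  rcases h : p.d.enc g with _ | j
  · trivial
  · exact p.d.enc_label g hg j h

theorem rface_ok (d : K × Bool) (hd : p.ok d.1) : p.okF (p.rface d) := by
  obtain ⟨k, b⟩ := d
  cases k with
  | ring l i =>
    obtain ⟨h1, h2⟩ := hd
    cases b
    · cases l with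
      | zero => exact p.okF_inn (p.le_t0.1 h2)
      | succ l => exact ⟨by omega, p.lc_le h2⟩
    · simp only [rface]
      split_ifs with h
      · exact ⟨h, h2⟩
      · trivial
  | up l i =>
    obtain ⟨h1, h2⟩ := hd
    cases b
    · exact ⟨h1, h2⟩
    · exact ⟨h1, p.pr_le h2⟩
  | rung i =>
    obtain ⟨h1, h2⟩ := hd
    have h3 := p.d.mt_lt i h1
    cases b
    · exact p.okF_inn (by omega)
    · exact p.okF_inn (by omega)

theorem rvert_rs (d : K × Bool) (hd : p.ok d.1) : p.rvert (p.rs d) = p.rvert d := by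
  obtain ⟨k, b⟩ := d
  cases k with
  | ring l i =>
    obtain ⟨h1, h2⟩ := hd
    cases b
    · simp only [rs]
      split_ifs with h
      · rfl
      · simp only [rvert, p.sc_pr h2]
    · cases l with
      | zero => exact p.rvert_rd (p.le_t0.1 (p.sc_le h2))
      | succ l => simp only [rs, rvert, p.par_fc (p.sc_le h2)]
  | up l i =>
    obtain ⟨h1, h2⟩ := hd
    cases b
    · simp only [rs, rvert, p.sc_pr h2]
    · simp only [rs]
      split_ifs with h
      · rfl
      · simp only [rvert, (p.not_lc h2 h).2.1]
  | rung i => cases b <;> rfl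

theorem rface_rs (d : K × Bool) (hd : p.ok d.1) : p.rface (p.rs d) = p.rface (rev d) := by
  obtain ⟨k, b⟩ := d
  cases k with
  | ring l i =>
    obtain ⟨h1, h2⟩ := hd
    cases b
    · simp only [rs, rev]
      split_ifs with h
      · simp only [rface, Bool.not_false, if_pos h]
      · simp only [rface, Bool.not_false, if_neg h]
    · cases l with
      | zero =>
        simp only [rs, rev, Bool.not_true]
        rw [p.rface_rd (p.le_t0.1 (p.sc_le h2))]
        simp only [rface]
        unfold sc
        split_ifs with h
        · have : i + 1 = p.d.len := by
            have := p.hL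
            rw [t_low _ _ (by omega)] at h
            omega
          rw [this, p.d.enc_zero, p.d.enc_len]
        · rfl
      | succ l => simp only [rs, rev, Bool.not_true, rface, p.pr_fc_sc h2]
  | up l i =>
    obtain ⟨h1, h2⟩ := hd
    cases b
    · simp only [rs, rev, Bool.not_false, rface, if_pos h1]
    · simp only [rs, rev, Bool.not_true]
      split_ifs with h
      · simp only [rface, ← h]
      · simp [rface, pr]
  | rung i =>
    obtain ⟨h1, h2⟩ := hd
    have h3 := p.d.mt_lt i h1
    have h4 := p.d.mt_mt i h1
    cases b
    · simp only [rs, rev, Bool.not_false, rface, p.d.enc_mt i h1]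
    · simp only [rs, rev, Bool.not_true, rface, p.d.enc_mt _ h3, h4]

/-- vertex type -/
abbrev VT : Type := {x : ℕ × ℕ // p.okV x}
/-- face type -/
abbrev FT : Type := {f : FR // p.okF f}
/-- edge type -/
abbrev ET : Type := {k : K // p.ok k}
/-- annulus faces -/
abbrev AT : Type := {x : ℕ × ℕ // x.1 < p.M ∧ x.2 ≤ p.t x.1}
/-- rungs -/
abbrev RT : Type := {i : ℕ // i < p.d.len ∧ i < p.d.mt i}

/-- counting edges -/
def eqvE : p.ET ≃ p.VT ⊕ p.AT ⊕ p.RT where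
  toFun
    | ⟨K.ring l i, hk⟩ => Sum.inl ⟨(l, i), hk⟩
    | ⟨K.up l i, hk⟩ => Sum.inr (Sum.inl ⟨(l, i), hk⟩)
    | ⟨K.rung i, hk⟩ => Sum.inr (Sum.inr ⟨i, hk⟩)
  invFun
    | Sum.inl x => ⟨K.ring x.1.1 x.1.2, x.2⟩
    | Sum.inr (Sum.inl x) => ⟨K.up x.1.1 x.1.2, x.2⟩
    | Sum.inr (Sum.inr x) => ⟨K.rung x.1, x.2⟩
  left_inv := by rintro ⟨_ | _ | _, hk⟩ <;> rfl
  right_inv := by rintro (x | x | x) <;> rfl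

/-- counting faces -/
def eqvF : p.FT ≃ p.AT ⊕ Option (Option p.RT) where
  toFun
    | ⟨FR.ann l i, hk⟩ => Sum.inl ⟨(l, i), hk⟩
    | ⟨FR.inn 0, hk⟩ => Sum.inr (some none)
    | ⟨FR.inn (j + 1), hk⟩ => Sum.inr (some (some ⟨j, hk⟩))
    | ⟨FR.top, hk⟩ => Sum.inr none
  invFun
    | Sum.inl x => ⟨FR.ann x.1.1 x.1.2, x.2⟩
    | Sum.inr (some none) => ⟨FR.inn 0, trivial⟩
    | Sum.inr (some (some x)) => ⟨FR.inn (x.1 + 1), x.2⟩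
    | Sum.inr none => ⟨FR.top, trivial⟩
  left_inv := by rintro ⟨_ | _ | _, hk⟩ <;> first | rfl | (rename_i j; cases j <;> rfl)
  right_inv := by rintro (x | _ | _ | x) <;> rfl

theorem t_le (l : ℕ) : p.t l ≤ p.d.len := (Nat.div_le_self _ _).trans (by omega)

instance finVT : Finite p.VT := by
  apply Set.Finite.to_subtype (s := {x | p.okV x})
  refine ((Set.finite_Iic p.M).prod (Set.finite_Iic p.d.len)).subset ?_
  rintro x ⟨h1, h2⟩
  exact ⟨h1, h2.trans (p.t_le _)⟩

instance finAT : Finite p.AT := by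
  apply Set.Finite.to_subtype (s := {x : ℕ × ℕ | x.1 < p.M ∧ x.2 ≤ p.t x.1})
  refine ((Set.finite_Iic p.M).prod (Set.finite_Iic p.d.len)).subset ?_
  rintro x ⟨h1, h2⟩
  exact ⟨h1.le, h2.trans (p.t_le _)⟩

instance finRT : Finite p.RT := by
  apply Set.Finite.to_subtype (s := {i : ℕ | i < p.d.len ∧ i < p.d.mt i})
  exact (Set.finite_Iio p.d.len).subset fun x hx => hx.1

instance finET : Finite p.ET := Finite.of_equiv _ p.eqvE.symm

instance finFT : Finite p.FT := Finite.of_equiv _ p.eqvF.symm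

theorem euler_card : Nat.card p.VT + Nat.card p.FT = Nat.card p.ET + 2 := by
  rw [Nat.card_congr p.eqvE, Nat.card_congr p.eqvF, Nat.card_sum, Nat.card_sum, Nat.card_sum,
    Finite.card_option, Finite.card_option]
  ring

/-- underlying raw dart -/
def raw (d : p.ET × Bool) : K × Bool := (d.1.1, d.2)

theorem raw_ok (d : p.ET × Bool) : p.ok (p.raw d).1 := d.1.2

/-- dart from a raw dart -/
def lift (d : K × Bool) (hd : p.ok d.1) : p.ET × Bool := (⟨d.1, hd⟩, d.2)

theorem raw_inj : Function.Injective p.raw := by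
  rintro ⟨⟨k, hk⟩, b⟩ ⟨⟨k', hk'⟩, b'⟩ h
  simp only [raw, Prod.mk.injEq] at h
  obtain ⟨rfl, rfl⟩ := h
  rfl

/-- the rotation function -/
def sig (d : p.ET × Bool) : p.ET × Bool := p.lift (p.rs (p.raw d)) (p.rs_ok _ (p.raw_ok d))

theorem raw_sig (d : p.ET × Bool) : p.raw (p.sig d) = p.rs (p.raw d) := rfl

theorem sig_surj : Function.Surjective p.sig := by
  intro d
  refine ⟨p.lift (p.ri (p.raw d)) (p.ri_ok _ (p.raw_ok d)), p.raw_inj ?_⟩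
  exact p.rs_ri _ (p.raw_ok d)

theorem sig_bij : Function.Bijective p.sig :=
  ⟨Finite.injective_iff_surjective.2 p.sig_surj, p.sig_surj⟩

/-- membership of raw darts -/
theorem trans_aux (O : Set (p.ET × Bool))
    (hb : p.lift (K.ring p.M 0, false) ⟨le_rfl, Nat.zero_le _⟩ ∈ O)
    (h1 : ∀ d ∈ O, p.sig d ∈ O) (h2 : ∀ d, p.sig d ∈ O → d ∈ O) (h3 : ∀ d ∈ O, rev d ∈ O) :
    ∀ d, d ∈ O := by
  set Q : K × Bool → Prop := fun d => ∃ hd, p.lift d hd ∈ O with hQ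
  have q1 : ∀ d, Q d → Q (p.rs d) := by
    rintro d ⟨hd, h⟩
    exact ⟨p.rs_ok d hd, h1 _ h⟩
  have q2 : ∀ d, Q d → Q (p.ri d) := by
    rintro d ⟨hd, h⟩
    refine ⟨p.ri_ok d hd, h2 _ ?_⟩
    have : p.sig (p.lift (p.ri d) (p.ri_ok d hd)) = p.lift d hd := p.raw_inj (p.rs_ri d hd)
    rwa [this]
  have q3 : ∀ d, Q d → Q (rev d) := by
    rintro d ⟨hd, h⟩
    exact ⟨hd, h3 _ h⟩
  have qb : Q (K.ring p.M 0, false) := ⟨_, hb⟩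
  -- going around a ring
  have qs : ∀ l i, l ≤ p.M → i ≤ p.t l → Q (K.ring l i, false) → Q (K.ring l (p.sc l i), false) := by
    intro l i hl hi h
    have h4 := q2 _ (q3 _ h)
    simp only [rev, Bool.not_false, ri] at h4
    split_ifs at h4 with hlt
    · exact q2 _ h4
    · exact h4
  have qr0 : ∀ l, l ≤ p.M → Q (K.ring l 0, false) → ∀ i ≤ p.t l, Q (K.ring l i, false) := by
    intro l hl h i
    induction i with
    | zero => intro _; exact h
    | succ i ih =>
      intro hi
      have := qs l i hl (by omega) (ih (by omega))
      rwa [sc, if_neg (by omega)] at this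
  have qr : ∀ j l, l + j = p.M → ∀ i ≤ p.t l, Q (K.ring l i, false) := by
    intro j
    induction j with
    | zero => intro l hl; rw [Nat.add_zero] at hl; subst hl; exact qr0 _ le_rfl qb
    | succ j ih =>
      intro l hl
      have h5 := ih (l + 1) (by omega) (p.t (l + 1)) le_rfl
      have h6 := q2 _ h5
      simp only [ri] at h6
      have hlast : p.lc l (p.t (l + 1)) = p.t l := by
        have := p.t_succ l
        unfold lc
        split_ifs at * <;> omega
      rw [hlast] at h6
      have h7 := q2 _ (q3 _ h6)
      have h8 := qs l (p.t l) (by omega) le_rfl h7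
      rw [sc, if_pos rfl] at h8
      exact qr0 l (by omega) h8
  have qring : ∀ l i, l ≤ p.M → i ≤ p.t l → Q (K.ring l i, false) := fun l i hl hi =>
    qr (p.M - l) l (by omega) i hi
  have qall : ∀ k, p.ok k → Q (k, false) := by
    intro k hk
    cases k with
    | ring l i => exact qring l i hk.1 hk.2
    | up l i =>
      have := q1 _ (qring l i (by have := hk.1; omega) hk.2)
      simp only [rs, if_pos hk.1] at this
      exact this
    | rung i =>
      have := q2 _ (qring 0 i (by omega) (p.le_t0.2 hk.1))
      simp only [ri, rd, if_pos hk.2] at this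
      exact this
  rintro ⟨⟨k, hk⟩, b⟩
  cases b
  · obtain ⟨_, h⟩ := qall k hk
    exact h
  · obtain ⟨_, h⟩ := q3 _ (qall k hk)
    exact h

/-- the planar map -/
noncomputable def pmap : PMap where
  V := p.VT
  F := p.FT
  E := p.ET
  σ := Equiv.ofBijective p.sig p.sig_bij
  vert := fun d => ⟨p.rvert (p.raw d), p.rvert_ok _ (p.raw_ok d)⟩
  face := fun d => ⟨p.rface (p.raw d), p.rface_ok _ (p.raw_ok d)⟩
  vert_σ := fun d => Subtype.ext (p.rvert_rs _ (p.raw_ok d))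
  face_σ := fun d => Subtype.ext (p.rface_rs _ (p.raw_ok d))
  vsurj := by
    rintro ⟨⟨l, i⟩, hx⟩
    exact ⟨p.lift (K.ring l i, false) hx, rfl⟩
  fsurj := by
    rintro ⟨_ | j | _, hf⟩
    · rename_i l i
      refine ⟨p.lift (K.up l i, false) hf, rfl⟩
    · cases j with
      | zero =>
        refine ⟨p.lift (K.rung 0, false) ⟨p.hL, Nat.pos_of_ne_zero (p.d.mt_ne 0 p.hL)⟩,
          Subtype.ext ?_⟩
        simp only [raw, lift, rface, p.d.enc_zero]
      | succ j =>
        refine ⟨p.lift (K.ring 0 j, false) ⟨Nat.zero_le _, p.le_t0.2 hf.1⟩, Subtype.ext ?_⟩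
        simp only [raw, lift, rface, p.d.enc_open j hf.1 hf.2]
    · refine ⟨p.lift (K.ring p.M 0, true) ⟨le_rfl, Nat.zero_le _⟩, Subtype.ext ?_⟩
      simp [raw, lift, rface]
  base := p.lift (K.ring p.M 0, false) ⟨le_rfl, Nat.zero_le _⟩
  trans := fun O hb h1 h2 h3 => p.trans_aux O hb h1 h2 h3
  euler := p.euler_card

end Par

end DualTree


set_option linter.unusedSectionVars false
set_option linter.unusedVariables false

namespace DualTree

theorem vertDegree_le {V E : Type} [Finite E] (lab : E × Bool → V) (v : V) (code : E × Bool → ℕ)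
    (n : ℕ) (hlt : ∀ d, code d < n)
    (hinj : ∀ d d', lab d = v → lab d' = v → code d = code d' → d = d') :
    vertDegree (labEnds lab) v ≤ n := by
  set A1 : Set E := {e | lab (e, false) = v} with hA1
  set A2 : Set E := {e | lab (e, true) = v} with hA2
  have e1 : {e | v ∈ labEnds lab e} = A1 ∪ A2 := by
    ext e
    simp only [labEnds, Sym2.mem_iff, hA1, hA2, Set.mem_union, Set.mem_ofPred_eq]
    constructor
    · rintro (h | h)
      · exact Or.inl h.symm
      · exact Or.inr h.symm
    · rintro (h | h)
      · exact Or.inl h.symm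
      · exact Or.inr h.symm
  have e2 : {e | labEnds lab e = s(v, v)} = A1 ∩ A2 := by
    ext e
    simp only [labEnds, Sym2.eq_iff, hA1, hA2, Set.mem_inter_iff, Set.mem_ofPred_eq, or_self]
  unfold vertDegree
  rw [e1, e2, Set.ncard_union_add_ncard_inter]
  have i1 : Function.Injective (fun e : E => (e, false)) := fun a b h => (Prod.mk.inj h).1
  have i2 : Function.Injective (fun e : E => (e, true)) := fun a b h => (Prod.mk.inj h).1
  rw [← Set.ncard_image_of_injective A1 i1, ← Set.ncard_image_of_injective A2 i2,
    ← Set.ncard_union_eq]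
  · have hsub : ∀ d ∈ (fun e : E => (e, false)) '' A1 ∪ (fun e : E => (e, true)) '' A2,
        lab d = v := by
      rintro d (⟨e, he, rfl⟩ | ⟨e, he, rfl⟩)
      · exact he
      · exact he
    have := Set.ncard_le_ncard_of_injOn code (t := Set.Iio n)
      (s := (fun e : E => (e, false)) '' A1 ∪ (fun e : E => (e, true)) '' A2)
      (fun d hd => hlt d) (fun d hd d' hd' h => hinj d d' (hsub d hd) (hsub d' hd') h)
      (Set.finite_Iio n)
    refine this.trans (le_of_eq ?_)
    rw [Set.ncard_eq_toFinset_card']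
    simp
  · rw [Set.disjoint_left]
    rintro d ⟨e, he, rfl⟩ ⟨e', he', h⟩
    simp at h

namespace Par

variable (p : Par)

/-- code of darts around a vertex -/
def vcode : K × Bool → ℕ
  | (K.ring l i, false) => 0
  | (K.ring l i, true) => 1
  | (K.up l i, false) => 2
  | (K.up l i, true) => 3 + i % 2
  | (K.rung i, _) => 5

/-- gap before a position, in `1..L` -/
def gap (i : ℕ) : ℕ := if i = 0 then p.d.len else i

/-- code of darts around a face -/
def fcode : K × Bool → ℕ
  | (K.ring 0 i, false) => p.d.rk (i + 1)
  | (K.ring (l + 1) i, false) => 0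
  | (K.ring l i, true) => 1
  | (K.up l i, false) => 2
  | (K.up l i, true) => 3
  | (K.rung i, false) => 3 + p.d.rk (p.gap i)
  | (K.rung i, true) => 3 + p.d.rk (p.gap (p.d.mt i))

theorem vcode_lt (d : K × Bool) : vcode d < 6 := by
  obtain ⟨k, b⟩ := d
  cases k <;> cases b <;> simp only [vcode] <;> omega

theorem fcode_lt (d : K × Bool) : p.fcode d < 6 := by
  obtain ⟨k, b⟩ := d
  have := p.d.rk_le
  cases k with
  | ring l i =>
    cases b
    · cases l with
      | zero => have := this (i + 1); simp only [fcode]; omega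
      | succ l => simp only [fcode]; omega
    · simp only [fcode]; omega
  | up l i => cases b <;> simp only [fcode] <;> omega
  | rung i =>
    have h1 := this (p.gap i)
    have h2 := this (p.gap (p.d.mt i))
    cases b <;> simp only [fcode] <;> omega

theorem sc_inj {l i j : ℕ} (hi : i ≤ p.t l) (hj : j ≤ p.t l) (h : p.sc l i = p.sc l j) : i = j := by
  rw [← p.pr_sc hi, h, p.pr_sc hj]

theorem pr_inj {l i j : ℕ} (hi : i ≤ p.t l) (hj : j ≤ p.t l) (h : p.pr l i = p.pr l j) : i = j := by
  rw [← p.sc_pr hi, h, p.sc_pr hj]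

theorem lc_inj {l i j : ℕ} (hi : i ≤ p.t (l + 1)) (hj : j ≤ p.t (l + 1))
    (h : p.lc l i = p.lc l j) : i = j := by
  rw [← p.par_lc hi, h, p.par_lc hj]

theorem par_inj {l i j : ℕ} (h : p.par l i = p.par l j) (h2 : i % 2 = j % 2) : i = j := by
  unfold par at h
  split_ifs at h <;> omega

theorem vcode_inj (d d' : K × Bool) (hd : p.ok d.1) (hd' : p.ok d'.1)
    (h : p.rvert d = p.rvert d') (hc : vcode d = vcode d') : d = d' := by
  obtain ⟨k, b⟩ := d
  obtain ⟨k', b'⟩ := d'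
  cases k <;> cases b <;> cases k' <;> cases b' <;> simp only [vcode] at hc <;>
    (try omega) <;> simp only [rvert, Prod.mk.injEq] at h
  · rw [h.1, h.2]
  · obtain ⟨rfl, h⟩ := h
    rw [p.sc_inj hd.2 hd'.2 h]
  · rw [h.1, h.2]
  · obtain ⟨h0, h⟩ := h
    obtain rfl := Nat.succ_injective h0
    rw [p.par_inj h (by omega)]
  · rw [h.2]
  · rename_i i j
    have h1 := p.d.mt_mt j hd'.1
    have := hd.2
    have := hd'.2
    rw [← h.2] at h1
    omega
  · rename_i i j
    have h1 := p.d.mt_mt i hd.1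
    have := hd.2
    have := hd'.2
    rw [h.2] at h1
    omega
  · rename_i i j
    have h1 := p.d.mt_mt i hd.1
    have h2 := p.d.mt_mt j hd'.1
    rw [h.2, h2] at h1
    rw [h1]

theorem enc_gap (i : ℕ) : p.d.enc (p.gap i) = p.d.enc i := by
  unfold gap
  split_ifs with h
  · rw [h, p.d.enc_zero, p.d.enc_len]
  · rfl

theorem gap_inj {i j : ℕ} (hi : i < p.d.len) (hj : j < p.d.len)
    (h : p.d.enc i = p.d.enc j) (hr : p.d.rk (p.gap i) = p.d.rk (p.gap j)) : i = j := by
  have := p.d.rk_inj (p.gap i) (by unfold gap; split_ifs <;> omega) (p.gap j)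
    (by unfold gap; split_ifs <;> omega) (by rw [p.enc_gap, p.enc_gap, h]) hr
  unfold gap at this
  split_ifs at this <;> omega

theorem fcode_inj (d d' : K × Bool) (hd : p.ok d.1) (hd' : p.ok d'.1)
    (h : p.rface d = p.rface d') (hc : p.fcode d = p.fcode d') : d = d' := by
  have hrung : ∀ i j, i < p.d.len → i < p.d.mt i → j < p.d.len → j < p.d.mt j →
      i = p.d.mt j → False := by
    intro i j h1 h2 h3 h4 h5
    have := p.d.mt_mt j h3
    rw [← h5] at this
    omega
  have hmt : ∀ i j, i < p.d.len → j < p.d.len → p.d.mt i = p.d.mt j → i = j := by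
    intro i j h1 h2 h3
    rw [← p.d.mt_mt i h1, h3, p.d.mt_mt j h2]
  have hrk := p.d.rk_le
  have htop : ∀ l i, l ≤ p.M → ¬ l < p.M → i ≤ p.t l → l = p.M ∧ i = 0 := by
    intro l i h1 h2 h3
    obtain rfl : l = p.M := by omega
    rw [p.t_M] at h3
    exact ⟨rfl, by omega⟩
  have key : ∀ k b k' b', p.ok k → p.ok k' → p.rface (k, b) = p.rface (k', b') →
      p.fcode (k, b) = p.fcode (k', b') → (k, b) = (k', b') := by
    intro k b k' b' hk hk' h hc
    rcases k with ⟨_ | l, i⟩ | ⟨l, i⟩ | i <;> cases b <;> rcases k' with ⟨_ | l', i'⟩ | ⟨l', i'⟩ | i' <;>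
      cases b' <;> simp only [rface, fcode] at h hc <;> (try split_ifs at h) <;>
      (try simp only [FR.ann.injEq, FR.inn.injEq, reduceCtorEq] at h) <;>
      (try (have := hrk (i + 1); have := hrk (i' + 1); omega))
    · have h1 := p.le_t0.1 hk.2
      have h2 := p.le_t0.1 hk'.2
      have := p.d.rk_inj (i + 1) (by omega) (i' + 1) (by omega) h hc
      rw [Nat.succ_injective this]
    · rw [h.2]
    · rw [(htop 0 i hk.1 (by assumption) hk.2).2, (htop 0 i' hk'.1 (by assumption) hk'.2).2]
    · exact h.1.elim
    · have h1 := (htop 0 i hk.1 (by assumption) hk.2).1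
      have := p.hM
      omega
    · obtain ⟨rfl, h⟩ := h
      rw [p.lc_inj hk.2 hk'.2 h]
    · exact h.1.elim
    · have h1 := (htop 0 i' hk'.1 (by assumption) hk'.2).1
      have := p.hM
      omega
    · obtain ⟨h1, rfl⟩ := h
      rw [Nat.succ_injective h1]
    · have h1 := htop _ i hk.1 (by assumption) hk.2
      have h2 := htop _ i' hk'.1 (by assumption) hk'.2
      rw [h1.1, h1.2, h2.1, h2.2]
    · rw [h.1, h.2]
    · obtain ⟨rfl, h⟩ := h
      rw [p.pr_inj hk.2 hk'.2 h]
    · rw [p.gap_inj hk.1 hk'.1 h (by omega)]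
    · exact (hrung _ _ hk.1 hk.2 hk'.1 hk'.2
        (p.gap_inj hk.1 (p.d.mt_lt _ hk'.1) h (by omega))).elim
    · exact (hrung _ _ hk'.1 hk'.2 hk.1 hk.2
        (p.gap_inj (p.d.mt_lt _ hk.1) hk'.1 h (by omega)).symm).elim
    · rw [hmt _ _ hk.1 hk'.1 (p.gap_inj (p.d.mt_lt _ hk.1) (p.d.mt_lt _ hk'.1) h (by omega))]
  exact key _ _ _ _ hd hd' h hc

/-- vertex labels of darts -/
def vlab (d : p.ET × Bool) : p.VT := ⟨p.rvert (p.raw d), p.rvert_ok _ (p.raw_ok d)⟩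

/-- face labels of darts -/
def flab (d : p.ET × Bool) : p.FT := ⟨p.rface (p.raw d), p.rface_ok _ (p.raw_ok d)⟩

theorem deg_v (v : p.VT) : vertDegree (labEnds p.vlab) v ≤ 6 := by
  refine vertDegree_le p.vlab v (fun d => vcode (p.raw d)) 6 (fun d => vcode_lt _) ?_
  intro d d' h h' hc
  refine p.raw_inj (p.vcode_inj _ _ (p.raw_ok d) (p.raw_ok d') ?_ hc)
  exact congrArg Subtype.val (h.trans h'.symm)

theorem deg_f (v : p.FT) : vertDegree (labEnds p.flab) v ≤ 6 := by
  refine vertDegree_le p.flab v (fun d => p.fcode (p.raw d)) 6 (fun d => p.fcode_lt _) ?_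
  intro d d' h h' hc
  refine p.raw_inj (p.fcode_inj _ _ (p.raw_ok d) (p.raw_ok d') ?_ hc)
  exact congrArg Subtype.val (h.trans h'.symm)

theorem ends_v (k : K) (hk : p.ok k) (x y : p.VT) (hx : p.rvert (k, false) = x.1)
    (hy : p.rvert (k, true) = y.1) : labEnds p.vlab ⟨k, hk⟩ = s(x, y) := by
  have h1 : p.vlab (⟨k, hk⟩, false) = x := Subtype.ext hx
  have h2 : p.vlab (⟨k, hk⟩, true) = y := Subtype.ext hy
  unfold labEnds
  rw [h1, h2]

theorem ends_f (k : K) (hk : p.ok k) (x y : p.FT) (hx : p.rface (k, false) = x.1)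
    (hy : p.rface (k, true) = y.1) : labEnds p.flab ⟨k, hk⟩ = s(x, y) := by
  have h1 : p.flab (⟨k, hk⟩, false) = x := Subtype.ext hx
  have h2 : p.flab (⟨k, hk⟩, true) = y := Subtype.ext hy
  unfold labEnds
  rw [h1, h2]

theorem reach_v : ∀ j l i, l + j = p.M → ∀ h : p.okV (l, i),
    edgeReachIn (labEnds p.vlab) Set.univ j ⟨(l, i), h⟩ ⟨(p.M, 0), le_rfl, Nat.zero_le _⟩ := by
  intro j
  induction j with
  | zero =>
    intro l i hl h
    refine Subtype.ext ?_
    have h2 := h.2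
    simp only [Nat.add_zero] at hl
    subst hl
    simp only [p.t_M] at h2
    simp only [Prod.mk.injEq, true_and]
    omega
  | succ j ih =>
    intro l i hl h
    have h2 := h.2
    simp only at h2
    have hv : p.okV (l + 1, p.par l i) := ⟨by simp only; omega, p.par_le h2⟩
    refine ⟨⟨(l + 1, p.par l i), hv⟩, ⟨⟨K.up l i, ⟨by omega, h2⟩⟩, trivial, ?_⟩,
      ih (l + 1) _ (by omega) hv⟩
    exact p.ends_v _ _ _ _ rfl rfl

theorem diam_v : edgeDiam (labEnds p.vlab) Set.univ ≤ 2 * p.M := by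
  refine diam_le_of_center ⟨(p.M, 0), le_rfl, Nat.zero_le _⟩ ?_
  rintro ⟨⟨l, i⟩, h⟩
  have h1 := h.1
  simp only at h1
  exact ⟨p.M - l, by omega, p.reach_v (p.M - l) l i (by omega) h⟩

theorem reach_f : ∀ j l i, l + j + 1 = p.M → ∀ h : p.okF (FR.ann l i),
    ∃ k ≤ 2 * (j + 1), edgeReachIn (labEnds p.flab) Set.univ k ⟨FR.ann l i, h⟩ ⟨FR.top, trivial⟩ := by
  intro j
  induction j with
  | zero =>
    intro l i hl h
    have h2 := h.2
    -- last child first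
    have hlast : ∀ i, ∀ h : p.okF (FR.ann l i), i = p.lc l (p.par l i) →
        edgeReachIn (labEnds p.flab) Set.univ 1 ⟨FR.ann l i, h⟩ ⟨FR.top, trivial⟩ := by
      intro i h hi
      refine reachIn_one (e := ⟨K.ring (l + 1) (p.par l i), ⟨by omega, p.par_le h.2⟩⟩) (Set.mem_univ _) ?_
      refine p.ends_f _ _ _ _ ?_ ?_
      · simp only [rface, ← hi]
      · simp only [rface]
        rw [if_neg (by omega)]
    by_cases hi : i = p.lc l (p.par l i)
    · exact ⟨1, by omega, hlast i h hi⟩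
    · obtain ⟨q1, q2, q3, _⟩ := p.not_lc h2 hi
      have h' : p.okF (FR.ann l (i + 1)) := ⟨h.1, q1⟩
      refine ⟨1 + 1, by omega, reachIn_trans (v := ⟨FR.ann l (i + 1), h'⟩) ?_
        (hlast (i + 1) h' (by rw [q2]; exact q3))⟩
      refine reachIn_symm (reachIn_one (e := ⟨K.up l (i + 1), ⟨h.1, q1⟩⟩) (Set.mem_univ _) ?_)
      refine p.ends_f _ _ _ _ rfl ?_
      simp [rface, pr]
  | succ j ih =>
    intro l i hl h
    have h2 := h.2
    have hlast : ∀ i, ∀ h : p.okF (FR.ann l i), i = p.lc l (p.par l i) →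
        ∃ k ≤ 2 * (j + 1) + 1,
        edgeReachIn (labEnds p.flab) Set.univ k ⟨FR.ann l i, h⟩ ⟨FR.top, trivial⟩ := by
      intro i h hi
      have hp : p.okF (FR.ann (l + 1) (p.par l i)) := ⟨by omega, p.par_le h.2⟩
      obtain ⟨k, hk, hr⟩ := ih (l + 1) (p.par l i) (by omega) hp
      refine ⟨1 + k, by omega, reachIn_trans (v := ⟨FR.ann (l + 1) (p.par l i), hp⟩) ?_ hr⟩
      refine reachIn_one (e := ⟨K.ring (l + 1) (p.par l i), ⟨by omega, p.par_le h.2⟩⟩) (Set.mem_univ _) ?_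
      refine p.ends_f _ _ _ _ ?_ ?_
      · simp only [rface, ← hi]
      · simp only [rface]
        rw [if_pos (by omega)]
    by_cases hi : i = p.lc l (p.par l i)
    · obtain ⟨k, hk, hr⟩ := hlast i h hi
      exact ⟨k, by omega, hr⟩
    · obtain ⟨q1, q2, q3, _⟩ := p.not_lc h2 hi
      have h' : p.okF (FR.ann l (i + 1)) := ⟨h.1, q1⟩
      obtain ⟨k, hk, hr⟩ := hlast (i + 1) h' (by rw [q2]; exact q3)
      refine ⟨1 + k, by omega, reachIn_trans (v := ⟨FR.ann l (i + 1), h'⟩) ?_ hr⟩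
      refine reachIn_symm (reachIn_one (e := ⟨K.up l (i + 1), ⟨h.1, q1⟩⟩) (Set.mem_univ _) ?_)
      refine p.ends_f _ _ _ _ rfl ?_
      simp [rface, pr]

theorem diam_f : edgeDiam (labEnds p.flab) Set.univ ≤ 2 * (2 * p.M + 1) := by
  refine diam_le_of_center ⟨FR.top, trivial⟩ ?_
  have hinn : ∀ x, x < p.d.len → ∀ h : p.okF (FR.inn (p.d.enc (x + 1))), ∃ k ≤ 2 * p.M + 1,
      edgeReachIn (labEnds p.flab) Set.univ k ⟨FR.inn (p.d.enc (x + 1)), h⟩ ⟨FR.top, trivial⟩ := by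
    intro x hx h
    have hM := p.hM
    have ha : p.okF (FR.ann 0 x) := ⟨by omega, p.le_t0.2 hx⟩
    obtain ⟨k, hk, hr⟩ := p.reach_f (p.M - 1) 0 x (by omega) ha
    refine ⟨1 + k, by omega, reachIn_trans (v := ⟨FR.ann 0 x, ha⟩) ?_ hr⟩
    refine reachIn_one (e := ⟨K.ring 0 x, ⟨by omega, p.le_t0.2 hx⟩⟩) (Set.mem_univ _) ?_
    refine p.ends_f _ _ _ _ rfl ?_
    exact if_pos (Nat.zero_lt_of_lt hM)
  rintro ⟨f, h⟩
  cases f with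
  | ann l i =>
    have h1 := h.1
    obtain ⟨k, hk, hr⟩ := p.reach_f (p.M - l - 1) l i (by omega) h
    exact ⟨k, by omega, hr⟩
  | top => exact ⟨0, by omega, rfl⟩
  | inn j =>
    cases j with
    | zero =>
      have hL := p.hL
      have := hinn (p.d.len - 1) (by omega)
      rw [show p.d.len - 1 + 1 = p.d.len by omega, p.d.enc_len] at this
      exact this h
    | succ j =>
      have := hinn j h.1
      rw [p.d.enc_open j h.1 h.2] at this
      exact this h

theorem lower (k : ℕ) (hh : 0 < p.h) (hd : p.d = DT.W p.h k) (T : Set p.ET)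
    (hT : IsSpanningTree (labEnds p.vlab) T) :
    (k + 1) * p.h ≤ 13 * (edgeDiam (labEnds p.vlab) T + edgeDiam (labEnds p.flab) Tᶜ) + 6 := by
  obtain ⟨N, A, hmono, h0, hN, hstep, hcut⟩ := p.pmap.sweep (fun v => by
    have := p.deg_v v
    unfold vertDegree at this
    exact (Nat.le_add_right _ _).trans this) T hT
  change ℕ → Set p.VT at A
  obtain ⟨s, b, hs, _, _, _, _, _, S, hS, hSk⟩ := raw_bound p.d.mt
    (fun t l i => ∃ hx : p.okV (l, i), (⟨(l, i), hx⟩ : p.VT) ∈ A t) N p.h p.d.len hh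
    (fun s t hst l i ⟨hx, h⟩ => ⟨hx, hmono hst h⟩)
    (fun l i ⟨hx, h⟩ => by rw [h0] at h; exact h)
    (fun l hl i hi => by
      have := p.hM
      refine ⟨⟨by simp only; omega, ?_⟩, by rw [hN]; trivial⟩
      simp only
      rw [p.t_low l (by omega)]
      omega)
    (fun t => by
      obtain ⟨w, hw⟩ := hstep t
      change p.VT at w
      refine ⟨w.1.1, w.1.2, ?_⟩
      rintro l i ⟨hx, h⟩
      rcases hw h with h | h
      · right
        rw [← h]
        exact ⟨rfl, rfl⟩
      · exact Or.inl ⟨hx, h⟩)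
    k 0 (fun i hi => by rw [← hd, Nat.zero_add, Nat.zero_add]) (by rw [← hd]; omega)
  refine hS.trans (le_trans ?_ (hcut s hs))
  rw [← hd] at hSk
  simp only [Nat.zero_add] at hSk
  change S.card ≤ {e : p.ET | ∃ u v, labEnds p.vlab e = s(u, v) ∧ u ∈ A s ∧ v ∉ A s}.ncard
  rw [← Set.ncard_image_of_injective _ Subtype.val_injective, ← Set.ncard_coe_finset]
  refine Set.ncard_le_ncard ?_ (Set.toFinite _)
  -- each cut raw edge is a cut edge
  have main : ∀ (k : K) (hk : p.ok k) (x y : p.VT), p.rvert (k, false) = x.1 →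
      p.rvert (k, true) = y.1 → ¬ (x ∈ A s ↔ y ∈ A s) →
      ∃ u v, labEnds p.vlab ⟨k, hk⟩ = s(u, v) ∧ u ∈ A s ∧ v ∉ A s := by
    intro k hk x y hx hy hne
    have he := p.ends_v k hk x y hx hy
    by_cases h1 : x ∈ A s
    · exact ⟨x, y, he, h1, fun h2 => hne ⟨fun _ => h2, fun _ => h1⟩⟩
    · refine ⟨y, x, he.trans Sym2.eq_swap, ?_, h1⟩
      by_contra h2
      exact hne ⟨fun h => (h1 h).elim, fun h => (h2 h).elim⟩
  have conv : ∀ l i l' i' (hx : p.okV (l, i)) (hy : p.okV (l', i')),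
      ¬ ((∃ hx : p.okV (l, i), (⟨(l, i), hx⟩ : p.VT) ∈ A s) ↔
        (∃ hx : p.okV (l', i'), (⟨(l', i'), hx⟩ : p.VT) ∈ A s)) →
      ¬ ((⟨(l, i), hx⟩ : p.VT) ∈ A s ↔ (⟨(l', i'), hy⟩ : p.VT) ∈ A s) := by
    intro l i l' i' hx hy hne he
    refine hne ⟨fun ⟨_, h⟩ => ⟨hy, he.1 h⟩, fun ⟨_, h⟩ => ⟨hx, he.2 h⟩⟩
  intro e he
  obtain ⟨hc, hi⟩ := hSk e he
  have hM := p.hM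
  cases e with
  | ring l i =>
    obtain ⟨i1, i2, i3⟩ := hi
    have ht := p.t_low l (by omega)
    have hk : p.ok (K.ring l i) := ⟨by omega, by omega⟩
    refine ⟨⟨_, hk⟩, ?_, rfl⟩
    refine main _ hk ⟨(l, i), hk⟩ ⟨(l, i + 1), by simp only; omega, by simp only; omega⟩ rfl ?_
      (conv _ _ _ _ _ _ hc)
    simp only [rvert, sc]
    rw [if_neg (by omega)]
  | up l i =>
    obtain ⟨i1, i2, i3⟩ := hi
    have ht := p.t_low l (by omega)
    have ht' := p.t_low (l + 1) (by omega)
    have hk : p.ok (K.up l i) := ⟨by omega, by omega⟩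
    refine ⟨⟨_, hk⟩, ?_, rfl⟩
    refine main _ hk ⟨(l, i), by simp only; omega, by simp only; omega⟩
      ⟨(l + 1, i), by simp only; omega, by simp only; omega⟩ rfl ?_ (conv _ _ _ _ _ _ hc)
    simp only [rvert, par]
    rw [if_pos (by omega)]
  | rung i =>
    obtain ⟨i1, i2, i3⟩ := hi
    have hk : p.ok (K.rung i) := ⟨by omega, i1⟩
    refine ⟨⟨_, hk⟩, ?_, rfl⟩
    exact main _ hk ⟨(0, i), Nat.zero_le _, p.le_t0.2 (by omega)⟩
      ⟨(0, p.d.mt i), Nat.zero_le _, p.le_t0.2 i3⟩ rfl rfl (conv _ _ _ _ _ _ hc)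

end Par

theorem pow_bound (n : ℕ) (hn : 0 < n) : (DT.W n (n + 6)).len < 2 ^ (19 * n) := by
  have h1 := DT.W_len n (n + 6)
  have h2 : 3 ^ (n + 6) * (5 * n + 4) ≤ 2 ^ (19 * n) := by
    clear h1
    induction n, hn using Nat.le_induction with
    | base => norm_num
    | succ n hn ih =>
      have e1 : 3 ^ (n + 1 + 6) = 3 * 3 ^ (n + 6) := by ring
      have e2 : 2 ^ (19 * (n + 1)) = 524288 * 2 ^ (19 * n) := by ring
      rw [e1, e2]
      have : 3 * 3 ^ (n + 6) * (5 * (n + 1) + 4) ≤ 6 * (3 ^ (n + 6) * (5 * n + 4)) := by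
        have : 5 * (n + 1) + 4 ≤ 2 * (5 * n + 4) := by omega
        calc 3 * 3 ^ (n + 6) * (5 * (n + 1) + 4) ≤ 3 * 3 ^ (n + 6) * (2 * (5 * n + 4)) :=
              Nat.mul_le_mul_left _ this
          _ = _ := by ring
      omega
  omega

/-- the parameters used for `n + 1` -/
def parN (n : ℕ) : Par where
  h := n + 1
  M := 20 * (n + 1)
  d := DT.W (n + 1) (n + 1 + 6)
  hM := by omega
  hL := by rw [DT.W_len_succ]; omega
  hLM := by
    have := pow_bound (n + 1) (by omega)
    rw [show 20 * (n + 1) - (n + 1) = 19 * (n + 1) by omega]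
    omega

/-- one-vertex pair -/
def trivPair : PlaneDualPair where
  V := Unit
  F := Unit
  E := Empty
  ends := fun e => e.elim
  dualEnds := fun e => e.elim
  conn := fun _ _ => Relation.ReflTransGen.refl
  dual_conn := fun _ _ => Relation.ReflTransGen.refl
  acyclic_iff_dual_conn := fun S =>
    ⟨fun _ _ _ => Relation.ReflTransGen.refl, fun _ e => e.elim⟩
  conn_iff_dual_acyclic := fun S =>
    ⟨fun _ e => e.elim, fun _ _ _ => Relation.ReflTransGen.refl⟩

/-- the family -/
noncomputable def fam : ℕ → PlaneDualPair
  | 0 => trivPair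
  | n + 1 => (parN n).pmap.toPair

theorem main_family (n : ℕ) :
    (∀ v : (fam n).V, vertDegree (fam n).ends v ≤ 6) ∧
    (∀ f : (fam n).F, vertDegree (fam n).dualEnds f ≤ 6) ∧
    edgeDiam (fam n).ends Set.univ + edgeDiam (fam n).dualEnds Set.univ ≤ 122 * n ∧
    ∀ T : Set (fam n).E, IsSpanningTree (fam n).ends T →
      n ^ 2 ≤ 13 * (edgeDiam (fam n).ends T + edgeDiam (fam n).dualEnds Tᶜ) := by
  cases n with
  | zero =>
    have hdeg : ∀ f : Empty → Sym2 Unit, ∀ v, vertDegree f v ≤ 6 := by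
      intro f v
      unfold vertDegree
      rw [Set.eq_empty_of_isEmpty {e | v ∈ f e}, Set.eq_empty_of_isEmpty {e | f e = s(v, v)}]
      simp
    have hdiam : ∀ f : Empty → Sym2 Unit, ∀ S, edgeDiam f S ≤ 2 * 0 := by
      intro f S
      exact diam_le_of_center () (fun u => ⟨0, le_rfl, rfl⟩)
    refine ⟨hdeg _, hdeg _, ?_, fun T _ => by simp⟩
    have h1 := hdiam trivPair.ends Set.univ
    have h2 := hdiam trivPair.dualEnds Set.univ
    exact (Nat.add_le_add h1 h2).trans (Nat.zero_le _)
  | succ n =>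
    refine ⟨(parN n).deg_v, (parN n).deg_f, ?_, ?_⟩
    · have h1 := (parN n).diam_v
      have h2 := (parN n).diam_f
      change edgeDiam (labEnds (parN n).vlab) Set.univ + edgeDiam (labEnds (parN n).flab) Set.univ ≤ _
      have : (parN n).M = 20 * (n + 1) := rfl
      omega
    · intro T hT
      have h1 := (parN n).lower (n + 1 + 6) (Nat.succ_pos n) rfl T hT
      change (n + 1) ^ 2 ≤ 13 * (edgeDiam (labEnds (parN n).vlab) T +
        edgeDiam (labEnds (parN n).flab) Tᶜ)
      have : (parN n).h = n + 1 := rfl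
      rw [this] at h1
      have : (n + 1 + 6 + 1) * (n + 1) = (n + 1) ^ 2 + 7 * n + 7 := by ring
      omega

end DualTree

/-- There is a family `(Gₙ)` of finite connected planar graphs and constants
`C₁, C₂ > 0` such that all vertices of `Gₙ` and of the dual `Gₙ*` have degree at most `6`,
`Diam Gₙ + Diam Gₙ* ≤ C₁ n`, yet for every spanning tree `T` of `Gₙ` (with dual spanning
tree `T*`), `Diam T + Diam T* ≥ C₂ n²`.  In particular, there is no constant `C` such that
every finite connected planar graph `G` admits a spanning tree `T` with
`Diam T ≤ C ⬝ Diam G` and `Diam T* ≤ C ⬝ Diam G*`. -/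
theorem no_uniform_dual_tree_diameter_bound :
    (∃ (Gfam : ℕ → PlaneDualPair) (C₁ C₂ : ℝ), 0 < C₁ ∧ 0 < C₂ ∧
      ∀ n : ℕ,
        (∀ v : (Gfam n).V, vertDegree (Gfam n).ends v ≤ 6) ∧
        (∀ f : (Gfam n).F, vertDegree (Gfam n).dualEnds f ≤ 6) ∧
        ((edgeDiam (Gfam n).ends Set.univ + edgeDiam (Gfam n).dualEnds Set.univ : ℕ) : ℝ)
          ≤ C₁ * n ∧
        ∀ T : Set (Gfam n).E, IsSpanningTree (Gfam n).ends T →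
          C₂ * (n : ℝ) ^ 2
            ≤ ((edgeDiam (Gfam n).ends T + edgeDiam (Gfam n).dualEnds Tᶜ : ℕ) : ℝ)) ∧
    ¬ ∃ C : ℝ, 0 < C ∧ ∀ P : PlaneDualPair, ∃ T : Set P.E, IsSpanningTree P.ends T ∧
        ((edgeDiam P.ends T : ℕ) : ℝ) ≤ C * (edgeDiam P.ends Set.univ : ℕ) ∧
        ((edgeDiam P.dualEnds Tᶜ : ℕ) : ℝ) ≤ C * (edgeDiam P.dualEnds Set.univ : ℕ) := by
  have lower : ∀ n : ℕ, ∀ T : Set (DualTree.fam n).E, IsSpanningTree (DualTree.fam n).ends T →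
      (1 / 13 : ℝ) * (n : ℝ) ^ 2 ≤ ((edgeDiam (DualTree.fam n).ends T +
        edgeDiam (DualTree.fam n).dualEnds Tᶜ : ℕ) : ℝ) := by
    intro n T hT
    have h1 := (DualTree.main_family n).2.2.2 T hT
    have h2 : ((n ^ 2 : ℕ) : ℝ) ≤ ((13 * (edgeDiam (DualTree.fam n).ends T +
        edgeDiam (DualTree.fam n).dualEnds Tᶜ) : ℕ) : ℝ) := Nat.cast_le.2 h1
    push_cast at h2 ⊢
    linarith
  have upper : ∀ n : ℕ, ((edgeDiam (DualTree.fam n).ends Set.univ +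
      edgeDiam (DualTree.fam n).dualEnds Set.univ : ℕ) : ℝ) ≤ 122 * n := by
    intro n
    have h2 : ((edgeDiam (DualTree.fam n).ends Set.univ +
      edgeDiam (DualTree.fam n).dualEnds Set.univ : ℕ) : ℝ) ≤ ((122 * n : ℕ) : ℝ) :=
      Nat.cast_le.2 (DualTree.main_family n).2.2.1
    push_cast at h2 ⊢
    exact h2
  refine ⟨⟨DualTree.fam, 122, 1 / 13, by norm_num, by norm_num, fun n =>
    ⟨(DualTree.main_family n).1, (DualTree.main_family n).2.1, upper n, lower n⟩⟩, ?_⟩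
  rintro ⟨C, hC, hall⟩
  obtain ⟨n, hn⟩ := exists_nat_gt (13 * 122 * C)
  obtain ⟨T, hT, h1, h2⟩ := hall (DualTree.fam n)
  have h3 := lower n T hT
  have h4 := upper n
  push_cast at h3 h4
  have hnpos : (0 : ℝ) < n := lt_trans (by positivity) hn
  have h5 := mul_le_mul_of_nonneg_left h4 hC.le
  have h6 := mul_lt_mul_of_pos_right hn hnpos
  nlinarith
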